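/- arXiv:2209.04816 — 3 statements merged into one kernel-verified Lean document; each statement's English description precedes it below -/
import Mathlib

section
/- Let d ≥ 1, ℓ ∈ ℤ_{≥0}^d, and let {U₁, U₂} be a partition of {1,…,d}. Let p_j ∈ 𝔻 \ {0} for j ∈ U₁ and q_j ∈ 𝕋 for j ∈ U₂, and define ω = (ω₁,…,ω_d) : 𝔻^d → 𝔻^d by ω_j(z) = (conj(p_j)/p_j)·(p_j − z_j)/(1 − conj(p_j)·z_j) if j ∈ U₁ and ω_j(z) = q_j·z_j if j ∈ U₂, and define ϑ(z) = ∏_{j∈U₁} (1 − |p_j|²)^{1+ℓ_j/2}/(1 − conj(p_j)·z_j)^{ℓ_j+2}. Then for all z, u ∈ 𝔻^d, ϑ(u)·conj(K_z(conj(ω(u)))) = ϑ(z)·K_{conj(ω(z))}(u), where K_w(u) = ∏_{j=1}^d (1 − u_j·conj(w_j))^{−(ℓ_j+2)}. -/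
open Complex ComplexConjugate

/-!
By Hermitian symmetry of the kernel, the claim says that `ϑ(z) K_{conj ω(z)}(u)` is symmetric in
`z` and `u`. This is checked coordinate by coordinate: multiplying by the denominator
`1 - conj p * z` from the weight clears the denominator of the Möbius map and leaves the symmetric
polynomial `1 - conj p * (z + u) + (conj p / p) * (z * u)`.
-/

section StarField

variable {F ι : Type*} [Field F] [StarRing F]

/-- The Möbius map with zero `p`, rotated so that it sends `0` to `conj p`. Over `ℂ` with
`0 < ‖p‖ < 1` it is an automorphism of the unit disk. -/
def normalizedMobius (p z : F) : F :=
  conj p / p * ((p - z) / (1 - conj p * z))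

/-- The symbol `ω` of the composition operator: a Möbius map in each coordinate in `U`, and
multiplication by `q j` in each of the others. -/
def mobiusRotation [DecidableEq ι] (U : Finset ι) (p q z : ι → F) (j : ι) : F :=
  if j ∈ U then normalizedMobius (p j) (z j) else q j * z j

/-- The weight `ϑ` paired with `mobiusRotation`, with arbitrary normalizing constants `c j` in place
of `(1 - ‖p j‖ ^ 2) ^ (n j / 2)`. -/
def mobiusWeight (U : Finset ι) (n : ι → ℕ) (p c z : ι → F) : F :=
  ∏ j ∈ U, c j / (1 - conj (p j) * z j) ^ n j

/-- The product kernel `K_w(u) = ∏ j, (1 - u j * conj (w j)) ^ (-n j)`; on the polydisk, `n j = 1`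
gives a Hardy factor and `n j = ℓ j + 2` a weighted Bergman factor. -/
def polydiskKernel [Fintype ι] (n : ι → ℕ) (w u : ι → F) : F :=
  ∏ j, ((1 - u j * conj (w j)) ^ n j)⁻¹

theorem one_sub_conj_mul_mul_one_sub_mul_normalizedMobius {p z : F} (hp : p ≠ 0)
    (hz : 1 - conj p * z ≠ 0) (u : F) :
    (1 - conj p * z) * (1 - u * normalizedMobius p z) =
      1 - conj p * (z + u) + conj p / p * (z * u) := by
  rw [normalizedMobius]
  field_simp
  ring

theorem conj_polydiskKernel [Fintype ι] (n : ι → ℕ) (w u : ι → F) :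
    conj (polydiskKernel n w u) = polydiskKernel n u w := by
  simp only [polydiskKernel, map_prod, map_inv₀, map_pow, map_sub, map_one, map_mul,
    starRingEnd_self_apply, mul_comm]

theorem mobiusWeight_mul_polydiskKernel [Fintype ι] [DecidableEq ι] {U : Finset ι} {p z : ι → F}
    (hp : ∀ j ∈ U, p j ≠ 0) (hz : ∀ j ∈ U, 1 - conj (p j) * z j ≠ 0)
    (n : ι → ℕ) (q c u : ι → F) :
    mobiusWeight U n p c z * polydiskKernel n (fun j => conj (mobiusRotation U p q z j)) u =
      ∏ j, if j ∈ U then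
        c j / (1 - conj (p j) * (z j + u j) + conj (p j) / p j * (z j * u j)) ^ n j
      else ((1 - q j * (z j * u j)) ^ n j)⁻¹ := by
  rw [mobiusWeight, ← Fintype.prod_ite_mem, polydiskKernel, ← Finset.prod_mul_distrib]
  refine Finset.prod_congr rfl fun j _ => ?_
  rw [starRingEnd_self_apply, mobiusRotation]
  split_ifs with hj
  · rw [← one_sub_conj_mul_mul_one_sub_mul_normalizedMobius (hp j hj) (hz j hj), mul_pow,
      ← div_eq_mul_inv, div_div]
  · rw [one_mul, mul_left_comm, mul_comm (u j)]

theorem stmt_8_general [Fintype ι] [DecidableEq ι] {U : Finset ι} {p z u : ι → F}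
    (hp : ∀ j ∈ U, p j ≠ 0) (hz : ∀ j ∈ U, 1 - conj (p j) * z j ≠ 0)
    (hu : ∀ j ∈ U, 1 - conj (p j) * u j ≠ 0) (n : ι → ℕ) (q c : ι → F) :
    mobiusWeight U n p c u *
        conj (polydiskKernel n z (fun j => conj (mobiusRotation U p q u j))) =
      mobiusWeight U n p c z *
        polydiskKernel n (fun j => conj (mobiusRotation U p q z j)) u := by
  rw [conj_polydiskKernel, mobiusWeight_mul_polydiskKernel hp hu,
    mobiusWeight_mul_polydiskKernel hp hz]
  simp only [add_comm (u _), mul_comm (u _)]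

end StarField

theorem one_sub_conj_mul_ne_zero {𝕜 : Type*} [RCLike 𝕜] {a z : 𝕜} (ha : ‖a‖ < 1) (hz : ‖z‖ < 1) :
    1 - conj a * z ≠ 0 := by
  have norm_lt_one : ‖conj a * z‖ < 1 := by
    rw [norm_mul, RCLike.norm_conj]
    exact mul_lt_one_of_nonneg_of_lt_one_left (norm_nonneg a) ha hz.le
  exact sub_ne_zero.mpr fun h => norm_lt_one.ne (by rw [← h, norm_one])

theorem stmt_8 (d : ℕ) (hd : 1 ≤ d) (ℓ : Fin d → ℕ)
    (U₁ U₂ : Finset (Fin d)) (hU : U₁ ∪ U₂ = Finset.univ) (hUdisj : U₁ ∩ U₂ = ∅)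
    (p q : Fin d → ℂ)
    (hp : ∀ j ∈ U₁, p j ≠ 0 ∧ ‖p j‖ < 1)
    (hq : ∀ j ∈ U₂, ‖q j‖ = 1)
    (ω : (Fin d → ℂ) → Fin d → ℂ)
    (hω : ∀ z : Fin d → ℂ, ∀ j : Fin d, ω z j =
      if j ∈ U₁ then (conj (p j) / p j) * ((p j - z j) / (1 - conj (p j) * z j))
      else q j * z j)
    (ϑ : (Fin d → ℂ) → ℂ)
    (hϑ : ∀ z : Fin d → ℂ, ϑ z =
      ∏ j ∈ U₁, (((1 - ‖p j‖ ^ 2) ^ ((1 : ℝ) + (ℓ j : ℝ) / 2) : ℝ) : ℂ) /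
        (1 - conj (p j) * z j) ^ (ℓ j + 2))
    (K : (Fin d → ℂ) → (Fin d → ℂ) → ℂ)
    (hK : ∀ w u : Fin d → ℂ, K w u = ∏ j, ((1 - u j * conj (w j)) ^ (ℓ j + 2))⁻¹) :
    ∀ z ∈ {z : Fin d → ℂ | ∀ j, ‖z j‖ < 1},
      ∀ u ∈ {u : Fin d → ℂ | ∀ j, ‖u j‖ < 1},
        ϑ u * conj (K z (fun i => conj (ω u i))) = ϑ z * K (fun i => conj (ω z i)) u := by
  obtain rfl : ω = mobiusRotation U₁ p q := funext₂ hω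
  obtain rfl : ϑ = mobiusWeight U₁ (fun j => ℓ j + 2) p _ := funext hϑ
  obtain rfl : K = polydiskKernel (fun j => ℓ j + 2) := funext₂ hK
  exact fun z hz u hu => stmt_8_general (fun j hj => (hp j hj).1)
    (fun j hj => one_sub_conj_mul_ne_zero (hp j hj).2 (hz j))
    (fun j hj => one_sub_conj_mul_ne_zero (hp j hj).2 (hu j)) _ q _
end

section
/- Let d ≥ 1 and ℓ ∈ ℤ_{≥0}^d. Let f : 𝔻^d → ℂ and g = (g₁,…,g_d) : 𝔻^d → 𝔻^d be analytic, and suppose that conj(f(z))·f(u)·K_{g(z)}(g(u)) = K_z(u) for all z, u ∈ 𝔻^d, where K_w(u) = ∏_{j=1}^d (1 − u_j·conj(w_j))^{−(ℓ_j+2)}. Then there exist c ∈ 𝕋, a₁,…,a_d ∈ 𝕋, θ = (θ₁,…,θ_d) ∈ 𝔻^d, and a bijection φ : {1,…,d} → {1,…,d} such that f(z) = c·∏_{j=1}^d (1 − |θ_j|²)^{1+ℓ_j/2}/(1 − a_j·conj(θ_j)·z_{φ(j)})^{ℓ_j+2} and g_κ(z) = a_κ·(conj(a_κ)·θ_κ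 − z_{φ(κ)})/(1 − a_κ·conj(θ_κ)·z_{φ(κ)}) for every κ ∈ {1,…,d} and all z ∈ 𝔻^d. -/
open Complex ComplexConjugate
open Filter Topology

/-!
Composing with Möbius maps of the disk reduces the problem to a self-map `h` of the polydisk with
`h 0 = 0` that preserves the reciprocal kernel `M(z, u) = ∏ j, (1 - u j * conj (z j)) ^ n j`. The
functions `M(z, ·)` span a finite-dimensional space of polynomials which is invariant under
composition with `h` and contains the coordinates, so `h` is polynomial. Differentiating
`M(h z, h u) = M(z, u)` at the origin in each variable shows that `h` is the restriction of an
invertible linear map `L`. The zeros of `t ↦ M(L z, L (t u)) = M(z, t u)` then show that every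
`L u j * conj (L z j)` vanishes or is some `u i * conj (z i)`, which forces `L` to permute the
coordinates up to unimodular factors.
-/

section KernelSpan

variable {X 𝕜 : Type*} [Field 𝕜]

lemma comp_mem_span_range_of_kernel_invariant {k : X → X → 𝕜} {h : X → X}
    (hk : ∀ x y, k (h x) (h y) = k x y) [FiniteDimensional 𝕜 (Submodule.span 𝕜 (Set.range k))]
    {F : X → 𝕜} (hF : F ∈ Submodule.span 𝕜 (Set.range k)) :
    F ∘ h ∈ Submodule.span 𝕜 (Set.range k) := by
  set W := Submodule.span 𝕜 (Set.range k)
  have hle : W ≤ W.map (LinearMap.funLeft 𝕜 𝕜 h) := by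
    refine Submodule.span_le.2 ?_
    rintro _ ⟨x, rfl⟩
    exact ⟨k (h x), Submodule.subset_span ⟨h x, rfl⟩, funext fun y ↦ hk x y⟩
  rw [Submodule.eq_of_le_of_finrank_le hle (Submodule.finrank_map_le _ _)]
  exact ⟨F, hF, rfl⟩

end KernelSpan

lemma eq_zero_or_exists_eq_of_prod_one_sub_mul_pow_eventuallyEq {ι κ : Type*} [Fintype ι]
    [Fintype κ] {n : ι → ℕ} {m : κ → ℕ} {x : ι → ℂ} {y : κ → ℂ}
    (h : ∀ᶠ t in 𝓝 (0 : ℂ), ∏ j, (1 - x j * t) ^ n j = ∏ i, (1 - y i * t) ^ m i)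
    {j : ι} (hj : n j ≠ 0) : x j = 0 ∨ ∃ i, x j = y i := by
  refine or_iff_not_imp_left.2 fun hx ↦ ?_
  have hpoly : ∏ j, (1 - Polynomial.C (x j) * Polynomial.X) ^ n j =
      ∏ i, (1 - Polynomial.C (y i) * Polynomial.X) ^ m i := by
    refine Polynomial.eq_of_infinite_eval_eq _ _ (infinite_of_mem_nhds (0 : ℂ) ?_)
    filter_upwards [h] with t ht
    simpa [Polynomial.eval_prod] using ht
  have hroot := congrArg (Polynomial.eval (x j)⁻¹) hpoly
  simp only [Polynomial.eval_prod, Polynomial.eval_pow, Polynomial.eval_sub, Polynomial.eval_one,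
    Polynomial.eval_mul, Polynomial.eval_X, Polynomial.eval_C] at hroot
  rw [Finset.prod_eq_zero (Finset.mem_univ j) (by simp [hx, hj]), eq_comm,
    Finset.prod_eq_zero_iff] at hroot
  obtain ⟨i, -, hi⟩ := hroot
  exact ⟨i, ((mul_inv_eq_one₀ hx).1 (sub_eq_zero.1 (eq_zero_of_pow_eq_zero hi)).symm).symm⟩

lemma exists_perm_apply_eq_mul_of_row_entries {ι R : Type*} [Finite ι] [DecidableEq ι]
    [CommSemiring R] [Nontrivial R] {L : (ι → R) ≃ₗ[R] (ι → R)}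
    (hL : ∀ j k m, k ≠ m → L (Pi.single m 1) j ≠ 0 → L (Pi.single k 1) j = 0) :
    ∃ φ : Equiv.Perm ι, (∀ j, L (Pi.single (φ j) 1) j ≠ 0) ∧
      ∀ u j, L u j = L (Pi.single (φ j) 1) j * u (φ j) := by
  have := Fintype.ofFinite ι
  have hcol : ∀ m, ∃ j, L (Pi.single m 1) j ≠ 0 := fun m ↦
    Function.ne_iff.1 (L.map_ne_zero_iff.2 (Pi.single_ne_zero_iff.2 one_ne_zero))
  choose row hrow using hcol
  have hrow_inj : Function.Injective row := by
    intro k m hkm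
    by_contra hne
    exact hrow k (hkm ▸ hL (row m) k m hne (hrow m))
  let e := Equiv.ofBijective row (Finite.injective_iff_bijective.1 hrow_inj)
  have hentry : ∀ j, L (Pi.single (e.symm j) 1) j ≠ 0 := fun j ↦ by
    have hj := hrow (e.symm j)
    rwa [show row (e.symm j) = j from e.apply_symm_apply j] at hj
  refine ⟨e.symm, hentry, fun u j ↦ ?_⟩
  have hexpand : L u j = ∑ m, u m * L (Pi.single m 1) j := by
    simpa using congrArg (L · j) ((Pi.basisFun R ι).sum_repr u).symm
  rw [hexpand, Finset.sum_eq_single (e.symm j), mul_comm]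
  · exact fun k _ hk ↦ by rw [hL j k _ hk (hentry j), mul_zero]
  · simp

section Polydisk

open MvPolynomial

variable {ι : Type*}

/-- The open unit polydisk with coordinates indexed by `ι`. -/
def unitPolydisk (ι : Type*) : Set (ι → ℂ) := {z | ∀ j, ‖z j‖ < 1}

lemma zero_mem_unitPolydisk : (0 : ι → ℂ) ∈ unitPolydisk ι := by simp [unitPolydisk]

lemma single_mem_unitPolydisk [DecidableEq ι] (m : ι) {s : ℂ} (hs : ‖s‖ < 1) :
    Pi.single m s ∈ unitPolydisk ι := by
  intro j
  obtain rfl | hj := eq_or_ne j m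
  · simpa using hs
  · simp [hj]

lemma unitPolydisk_mem_nhds_zero [Finite ι] : unitPolydisk ι ∈ 𝓝 0 :=
  eventually_all.2 fun j ↦
    (continuous_apply j).norm.continuousAt.eventually_lt_const (by simp)

lemma eventually_smul_mem_unitPolydisk [Finite ι] (z : ι → ℂ) :
    ∀ᶠ t in 𝓝 (0 : ℂ), t • z ∈ unitPolydisk ι := by
  have hcont : Tendsto (fun t : ℂ ↦ t • z) (𝓝 0) (𝓝 0) :=
    Continuous.tendsto' (by fun_prop) _ _ (zero_smul ℂ z)
  exact hcont unitPolydisk_mem_nhds_zero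

variable [Fintype ι]

/-- The reciprocal `∏ j, (1 - u j * conj (w j)) ^ n j` of the weighted Bergman kernel `K_w(u)` of
the polydisk, with `n j = ℓ j + 2` in the notation of the paper. -/
def bergmanDenom (n : ι → ℕ) (w u : ι → ℂ) : ℂ := ∏ j, (1 - u j * conj (w j)) ^ n j

variable {n : ι → ℕ} {w u : ι → ℂ}

@[simp]
lemma bergmanDenom_zero_left (n : ι → ℕ) (u : ι → ℂ) : bergmanDenom n 0 u = 1 := by
  simp [bergmanDenom]

lemma conj_bergmanDenom (n : ι → ℕ) (w u : ι → ℂ) :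
    conj (bergmanDenom n w u) = bergmanDenom n u w := by
  simp [bergmanDenom, mul_comm]

lemma bergmanDenom_single_left [DecidableEq ι] (n : ι → ℕ) (m : ι) (s : ℂ) (u : ι → ℂ) :
    bergmanDenom n (Pi.single m s) u = (1 - u m * conj s) ^ n m := by
  rw [bergmanDenom, Finset.prod_eq_single m (fun j _ hj ↦ by simp [hj]) (by simp),
    Pi.single_eq_same]

lemma exists_mvPolynomial_eval_eq_bergmanDenom (n : ι → ℕ) (w : ι → ℂ) :
    ∃ p : MvPolynomial ι ℂ, p.totalDegree ≤ ∑ j, n j ∧ ∀ u, eval u p = bergmanDenom n w u := by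
  refine ⟨∏ j, (1 - X j * C (conj (w j))) ^ n j, ?_, fun u ↦ by simp [bergmanDenom]⟩
  refine (totalDegree_finsetProd _ _).trans (Finset.sum_le_sum fun j _ ↦ ?_)
  have hfactor : (1 - X j * C (conj (w j)) : MvPolynomial ι ℂ).totalDegree ≤ 1 := by
    refine (totalDegree_sub _ _).trans (max_le (by simp) ((totalDegree_mul _ _).trans ?_))
    simp
  exact (totalDegree_pow _ _).trans (mul_le_of_le_one_right' hfactor)

/-- The space of functions on the polydisk spanned by the reciprocals of the Bergman kernels. -/
abbrev bergmanDenomSpan (n : ι → ℕ) : Submodule ℂ (unitPolydisk ι → ℂ) :=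
  Submodule.span ℂ (Set.range fun z : unitPolydisk ι ↦ fun u : unitPolydisk ι ↦ bergmanDenom n z u)

lemma bergmanDenomSpan_le (n : ι → ℕ) :
    bergmanDenomSpan n ≤ (restrictTotalDegree ι ℂ (∑ j, n j)).map
      (LinearMap.pi fun u : unitPolydisk ι ↦ (aeval u.1).toLinearMap) := by
  refine Submodule.span_le.2 ?_
  rintro _ ⟨z, rfl⟩
  obtain ⟨p, hdeg, hp⟩ := exists_mvPolynomial_eval_eq_bergmanDenom n z
  exact ⟨p, (mem_restrictTotalDegree _ _ _).2 hdeg, funext fun u ↦ hp u⟩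

instance (n : ι → ℕ) : FiniteDimensional ℂ (bergmanDenomSpan n) :=
  Submodule.finiteDimensional_of_le (bergmanDenomSpan_le n)

lemma exists_mvPolynomial_of_mem_bergmanDenomSpan {F : unitPolydisk ι → ℂ}
    (hF : F ∈ bergmanDenomSpan n) : ∃ p : MvPolynomial ι ℂ, ∀ u, F u = eval u.1 p := by
  obtain ⟨p, -, rfl⟩ := bergmanDenomSpan_le n hF
  exact ⟨p, fun _ ↦ rfl⟩

-- A coordinate is, up to a scalar, the derivative at `s = 0` of the kernel based at `s • e_m`;
-- finite-dimensional subspaces are closed under such pointwise limits.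
lemma coordinate_mem_bergmanDenomSpan {m : ι} (hm : n m ≠ 0) :
    (fun u : unitPolydisk ι ↦ u.1 m) ∈ bergmanDenomSpan n := by
  classical
  set F : ℂ → unitPolydisk ι → ℂ := fun s u ↦ (1 - u.1 m * s) ^ n m
  have hF : ∀ s : ℂ, ‖s‖ < 1 → F s ∈ bergmanDenomSpan n := fun s hs ↦ by
    have hmem := single_mem_unitPolydisk m (s := conj s) (by simpa using hs)
    refine Submodule.subset_span ⟨⟨_, hmem⟩, funext fun u ↦ ?_⟩
    simp [F, bergmanDenom_single_left]
  have hslope : Tendsto (slope F 0) (𝓝[≠] 0) (𝓝 fun u ↦ -n m * u.1 m) := by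
    refine tendsto_pi_nhds.2 fun u ↦ ?_
    have hderiv : HasDerivAt (fun s : ℂ ↦ (1 - u.1 m * s) ^ n m) (-n m * u.1 m) 0 := by
      simpa using (((hasDerivAt_id (0 : ℂ)).const_mul (u.1 m)).const_sub 1).fun_pow (n m)
    exact hasDerivAt_iff_tendsto_slope.1 hderiv
  have hlim : (fun u : unitPolydisk ι ↦ -n m * u.1 m) ∈ bergmanDenomSpan n := by
    refine (bergmanDenomSpan n).closed_of_finiteDimensional.mem_of_tendsto hslope ?_
    filter_upwards [nhdsWithin_le_nhds (Metric.ball_mem_nhds (0 : ℂ) one_pos)] with s hs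
    exact Submodule.smul_mem _ _ (Submodule.sub_mem _ (hF s (by simpa using hs)) (hF 0 (by simp)))
  refine (Submodule.smul_mem_iff _ (neg_ne_zero.2 (Nat.cast_ne_zero.2 hm) : -(n m : ℂ) ≠ 0)).1 ?_
  exact hlim

variable {h : (ι → ℂ) → ι → ℂ}

lemma differentiableAt_zero_of_bergmanDenom_eq (hn : ∀ j, n j ≠ 0)
    (hmaps : Set.MapsTo h (unitPolydisk ι) (unitPolydisk ι))
    (hh : ∀ z ∈ unitPolydisk ι, ∀ u ∈ unitPolydisk ι,
      bergmanDenom n (h z) (h u) = bergmanDenom n z u) :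
    DifferentiableAt ℂ h 0 := by
  let k : unitPolydisk ι → unitPolydisk ι → ℂ := fun z u ↦ bergmanDenom n z u
  have hinv : ∀ z u, k (hmaps.restrict h _ _ z) (hmaps.restrict h _ _ u) = k z u :=
    fun z u ↦ hh z z.2 u u.2
  refine differentiableAt_pi.2 fun m ↦ ?_
  have hmem : (fun u : unitPolydisk ι ↦ u.1 m) ∘ hmaps.restrict h _ _ ∈ bergmanDenomSpan n :=
    comp_mem_span_range_of_kernel_invariant hinv (coordinate_mem_bergmanDenomSpan (hn m))
  obtain ⟨p, hp⟩ := exists_mvPolynomial_of_mem_bergmanDenomSpan hmem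
  have hpoly : AnalyticAt ℂ (fun u : ι → ℂ ↦ eval u p) 0 :=
    AnalyticOnNhd.eval_continuousLinearMap (.id ℂ (ι → ℂ)) p 0 (Set.mem_univ 0)
  refine hpoly.differentiableAt.congr_of_eventuallyEq ?_
  filter_upwards [unitPolydisk_mem_nhds_zero] with u hu using hp ⟨u, hu⟩

/-- The sesquilinear form `⟨z, u⟩ ↦ ∑ j, n j * conj (z j) * u j` as a linear functional of `u`.
Up to sign it is the linear part of `bergmanDenom n z` at the origin. -/
noncomputable def weightedPairing (n : ι → ℕ) (z : ι → ℂ) : (ι → ℂ) →L[ℂ] ℂ :=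
  ∑ j, (n j * conj (z j)) • ContinuousLinearMap.proj j

lemma weightedPairing_apply (n : ι → ℕ) (z u : ι → ℂ) :
    weightedPairing n z u = ∑ j, n j * conj (z j) * u j := by
  simp [weightedPairing]

lemma conj_weightedPairing (n : ι → ℕ) (z u : ι → ℂ) :
    conj (weightedPairing n z u) = weightedPairing n u z := by
  simp only [weightedPairing_apply, map_sum, map_mul, conj_conj, map_natCast]
  exact Finset.sum_congr rfl fun j _ ↦ by ring

lemma eq_zero_of_forall_weightedPairing_eq_zero (hn : ∀ j, n j ≠ 0)
    (hu : ∀ z, weightedPairing n z u = 0) : u = 0 := by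
  classical
  ext m
  have hm := hu (Pi.single m 1)
  rw [weightedPairing_apply, Finset.sum_eq_single m (fun j _ hj ↦ by simp [hj]) (by simp)] at hm
  simpa [hn m] using hm

lemma hasFDerivAt_bergmanDenom_zero (n : ι → ℕ) (z : ι → ℂ) :
    HasFDerivAt (bergmanDenom n z) (-weightedPairing n z) 0 := by
  classical
  have hfactor : ∀ j ∈ Finset.univ, HasFDerivAt (fun u : ι → ℂ ↦ (1 - u j * conj (z j)) ^ n j)
      (-((n j * conj (z j)) • ContinuousLinearMap.proj (R := ℂ) (φ := fun _ ↦ ℂ) j)) 0 := by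
    intro j _
    have hlin := ((hasFDerivAt_apply (𝕜 := ℂ) j (0 : ι → ℂ)).mul_const (conj (z j))).const_sub 1
    refine (hlin.pow (n j)).congr_fderiv ?_
    ext v
    simp [mul_assoc]
  refine (HasFDerivAt.finsetProd hfactor).congr_fderiv ?_
  simp [weightedPairing]

-- Differentiating the kernel identity in `u`, then in `z`, shows that the derivative of `h` at `0`
-- preserves the pairing, and that `h` itself does so against that derivative.
lemma exists_linearEquiv_eqOn_of_bergmanDenom_eq (hn : ∀ j, n j ≠ 0)
    (hh₀ : h 0 = 0) (hdiff : DifferentiableAt ℂ h 0)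
    (hh : ∀ z ∈ unitPolydisk ι, ∀ u ∈ unitPolydisk ι,
      bergmanDenom n (h z) (h u) = bergmanDenom n z u) :
    ∃ L : (ι → ℂ) ≃ₗ[ℂ] (ι → ℂ), Set.EqOn h L (unitPolydisk ι) := by
  set L := fderiv ℂ h 0
  have hL : HasFDerivAt h L 0 := hdiff.hasFDerivAt
  have hpair : ∀ z ∈ unitPolydisk ι, ∀ v,
      weightedPairing n (L v) (h z) = weightedPairing n v z := by
    intro z hz v
    have hcomp : HasFDerivAt (bergmanDenom n (h z) ∘ h) ((-weightedPairing n (h z)).comp L) 0 := by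
      refine HasFDerivAt.comp 0 ?_ hL
      rw [hh₀]
      exact hasFDerivAt_bergmanDenom_zero n (h z)
    have hev : bergmanDenom n (h z) ∘ h =ᶠ[𝓝 0] bergmanDenom n z := by
      filter_upwards [unitPolydisk_mem_nhds_zero] with u hu using hh z hz u hu
    have huniq := hcomp.unique ((hasFDerivAt_bergmanDenom_zero n z).congr_of_eventuallyEq hev)
    have hv : weightedPairing n (h z) (L v) = weightedPairing n z v := by
      simpa using congrArg (· v) huniq
    rw [← conj_weightedPairing, hv, conj_weightedPairing]
  have hpairL : ∀ v w, weightedPairing n (L v) (L w) = weightedPairing n v w := by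
    intro v w
    have hev : (fun u ↦ weightedPairing n (L v) (h u)) =ᶠ[𝓝 0] weightedPairing n v := by
      filter_upwards [unitPolydisk_mem_nhds_zero] with u hu using hpair u hu v
    have huniq := ((weightedPairing n (L v)).hasFDerivAt.comp 0 hL).unique
      ((weightedPairing n v).hasFDerivAt.congr_of_eventuallyEq hev)
    exact congrArg (· w) huniq
  have hinj : Function.Injective L.toLinearMap := by
    refine (injective_iff_map_eq_zero _).2 fun w hw ↦
      eq_zero_of_forall_weightedPairing_eq_zero hn fun v ↦ ?_
    rw [← hpairL v w, show L w = 0 from hw, map_zero]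
  refine ⟨LinearEquiv.ofInjectiveEndo L.toLinearMap hinj, fun z hz ↦ sub_eq_zero.1 ?_⟩
  refine eq_zero_of_forall_weightedPairing_eq_zero hn fun y ↦ ?_
  obtain ⟨v, rfl⟩ := LinearMap.surjective_of_injective hinj y
  simp [hpair z hz v, hpairL v z]

lemma apply_mul_conj_apply_eq_zero_or (hn : ∀ j, n j ≠ 0) {L : (ι → ℂ) →ₗ[ℂ] (ι → ℂ)}
    (hL : ∀ z ∈ unitPolydisk ι, ∀ u ∈ unitPolydisk ι,
      bergmanDenom n (L z) (L u) = bergmanDenom n z u) (z u : ι → ℂ) (j : ι) :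
    L u j * conj (L z j) = 0 ∨ ∃ i, L u j * conj (L z j) = u i * conj (z i) := by
  obtain ⟨r, hr, hr₀ : r ≠ 0⟩ :=
    (((eventually_smul_mem_unitPolydisk z).filter_mono nhdsWithin_le_nhds).and
      (self_mem_nhdsWithin (s := {0}ᶜ))).exists
  have hprod : ∀ᶠ t in 𝓝 (0 : ℂ), ∏ j, (1 - L u j * conj (L (r • z) j) * t) ^ n j =
      ∏ i, (1 - u i * conj ((r • z) i) * t) ^ n i := by
    filter_upwards [eventually_smul_mem_unitPolydisk u] with t ht
    simpa [bergmanDenom, mul_assoc, mul_comm, mul_left_comm] using hL _ hr _ ht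
  have hconj : conj r ≠ 0 := by simpa using hr₀
  obtain hzero | ⟨i, hi⟩ := eq_zero_or_exists_eq_of_prod_one_sub_mul_pow_eventuallyEq hprod (hn j)
  · exact Or.inl (by simpa [hr₀] using hzero)
  · refine Or.inr ⟨i, mul_left_cancel₀ hconj ?_⟩
    simpa [mul_left_comm] using hi

lemma exists_perm_of_linearEquiv_bergmanDenom_eq (hn : ∀ j, n j ≠ 0)
    (L : (ι → ℂ) ≃ₗ[ℂ] (ι → ℂ))
    (hL : ∀ z ∈ unitPolydisk ι, ∀ u ∈ unitPolydisk ι,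
      bergmanDenom n (L z) (L u) = bergmanDenom n z u) :
    ∃ (α : ι → ℂ) (φ : Equiv.Perm ι), (∀ j, ‖α j‖ = 1) ∧ ∀ u j, L u j = α j * u (φ j) := by
  classical
  have hdich : ∀ z u j,
      L u j * conj (L z j) = 0 ∨ ∃ i, L u j * conj (L z j) = u i * conj (z i) :=
    apply_mul_conj_apply_eq_zero_or hn (L := L.toLinearMap) hL
  have hoff : ∀ j k m, k ≠ m → L (Pi.single m 1) j ≠ 0 → L (Pi.single k 1) j = 0 := by
    intro j k m hkm hjm
    have hzero : L (Pi.single k 1) j * conj (L (Pi.single m 1) j) = 0 := by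
      refine (hdich (Pi.single m 1) (Pi.single k 1) j).elim id fun ⟨i, hi⟩ ↦ hi.trans ?_
      obtain rfl | hik := eq_or_ne i k <;> simp [*]
    simpa [hjm] using hzero
  have hnorm : ∀ j m, L (Pi.single m 1) j ≠ 0 → ‖L (Pi.single m 1) j‖ = 1 := by
    intro j m hjm
    obtain hzero | ⟨i, hi⟩ := hdich (Pi.single m 1) (Pi.single m 1) j
    · simp [hjm] at hzero
    · obtain rfl | him := eq_or_ne i m
      · have hsq : ‖L (Pi.single i 1) j‖ ^ 2 = 1 := by
          rw [← ofReal_inj, ofReal_pow, ← mul_conj', hi]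
          simp
        exact (pow_eq_one_iff_of_nonneg (norm_nonneg _) two_ne_zero).1 hsq
      · simp [him, hjm] at hi
  obtain ⟨φ, hφ, hLφ⟩ := exists_perm_apply_eq_mul_of_row_entries hoff
  exact ⟨fun j ↦ L (Pi.single (φ j) 1) j, φ, fun j ↦ hnorm j _ (hφ j), hLφ⟩

theorem exists_perm_of_bergmanDenom_eq (hn : ∀ j, n j ≠ 0)
    (hmaps : Set.MapsTo h (unitPolydisk ι) (unitPolydisk ι)) (hh₀ : h 0 = 0)
    (hh : ∀ z ∈ unitPolydisk ι, ∀ u ∈ unitPolydisk ι,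
      bergmanDenom n (h z) (h u) = bergmanDenom n z u) :
    ∃ (α : ι → ℂ) (φ : Equiv.Perm ι), (∀ j, ‖α j‖ = 1) ∧
      ∀ u ∈ unitPolydisk ι, ∀ j, h u j = α j * u (φ j) := by
  obtain ⟨L, hL⟩ := exists_linearEquiv_eqOn_of_bergmanDenom_eq hn hh₀
    (differentiableAt_zero_of_bergmanDenom_eq hn hmaps hh) hh
  obtain ⟨α, φ, hα, hLα⟩ := exists_perm_of_linearEquiv_bergmanDenom_eq hn L fun z hz u hu ↦ by
    rw [← hL hz, ← hL hu, hh z hz u hu]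
  exact ⟨α, φ, hα, fun u hu j ↦ by rw [hL hu, hLα]⟩

end Polydisk

section Moebius

variable {b v w : ℂ}

lemma one_sub_mul_conj_ne_zero (hv : ‖v‖ < 1) (hw : ‖w‖ < 1) : 1 - v * conj w ≠ 0 := by
  have hlt : ‖v * conj w‖ < 1 := by
    simpa using mul_lt_one_of_nonneg_of_lt_one_left (norm_nonneg v) hv hw.le
  exact fun h ↦ hlt.ne (by rw [← sub_eq_zero.1 h, norm_one])

/-- The Möbius automorphism of the unit disk that sends `b` to `0`; its inverse is
`discMoebius (-b)`. -/
noncomputable def discMoebius (b w : ℂ) : ℂ := (w - b) / (1 - w * conj b)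

lemma one_sub_discMoebius_mul_conj (hv : 1 - v * conj b ≠ 0) (hw : 1 - w * conj b ≠ 0) :
    1 - discMoebius b w * conj (discMoebius b v) =
      (1 - b * conj b) * (1 - w * conj v) / ((1 - w * conj b) * conj (1 - v * conj b)) := by
  have hv' : conj (1 - v * conj b) ≠ 0 := (map_ne_zero _).2 hv
  rw [discMoebius, discMoebius, map_div₀, div_mul_div_comm, eq_div_iff (mul_ne_zero hw hv'),
    sub_mul, div_mul_cancel₀ _ (mul_ne_zero hw hv')]
  simp only [map_sub, map_mul, map_one, conj_conj]
  ring

lemma norm_discMoebius_lt_one (hb : ‖b‖ < 1) (hw : ‖w‖ < 1) : ‖discMoebius b w‖ < 1 := by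
  have hne := one_sub_mul_conj_ne_zero hw hb
  have hsq : 1 - ‖discMoebius b w‖ ^ 2 =
      (1 - ‖b‖ ^ 2) * (1 - ‖w‖ ^ 2) / ‖1 - w * conj b‖ ^ 2 := by
    have hid := one_sub_discMoebius_mul_conj hne hne
    simp only [mul_conj'] at hid
    exact_mod_cast hid
  have hpos : 0 < 1 - ‖discMoebius b w‖ ^ 2 := by
    rw [hsq]
    have hb' : 0 < 1 - ‖b‖ ^ 2 := by nlinarith [norm_nonneg b]
    have hw' : 0 < 1 - ‖w‖ ^ 2 := by nlinarith [norm_nonneg w]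
    exact div_pos (mul_pos hb' hw') (pow_pos (norm_pos_iff.2 hne) 2)
  nlinarith [norm_nonneg (discMoebius b w)]

lemma discMoebius_neg_discMoebius (hb : ‖b‖ < 1) (hw : 1 - w * conj b ≠ 0) :
    discMoebius (-b) (discMoebius b w) = w := by
  have hbb := one_sub_mul_conj_ne_zero hb hb
  have hnum : discMoebius b w + b = w * (1 - b * conj b) / (1 - w * conj b) := by
    rw [discMoebius, div_add' _ _ _ hw]
    ring
  have hden : 1 + discMoebius b w * conj b = (1 - b * conj b) / (1 - w * conj b) := by
    rw [discMoebius, div_mul_eq_mul_div, add_div' _ _ _ hw]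
    ring
  rw [discMoebius, sub_neg_eq_add, map_neg, mul_neg, sub_neg_eq_add, hnum, hden,
    div_div_div_cancel_right₀ hw, mul_div_cancel_right₀ _ hbb]

end Moebius

section Normalisation

variable {ι : Type*} [Fintype ι] {n : ι → ℕ} {b v w : ι → ℂ}

lemma bergmanDenom_ne_zero (hv : v ∈ unitPolydisk ι) (hw : w ∈ unitPolydisk ι) :
    bergmanDenom n v w ≠ 0 :=
  Finset.prod_ne_zero_iff.2 fun j _ ↦ pow_ne_zero _ (one_sub_mul_conj_ne_zero (hw j) (hv j))

lemma bergmanDenom_discMoebius (hb : b ∈ unitPolydisk ι) (hv : v ∈ unitPolydisk ι)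
    (hw : w ∈ unitPolydisk ι) :
    bergmanDenom n (fun j ↦ discMoebius (b j) (v j)) (fun j ↦ discMoebius (b j) (w j)) =
      bergmanDenom n b b * bergmanDenom n v w / (bergmanDenom n b w * bergmanDenom n v b) := by
  rw [← conj_bergmanDenom n b v]
  simp only [bergmanDenom, map_prod, map_pow, ← Finset.prod_mul_distrib, ← Finset.prod_div_distrib,
    ← mul_pow, ← div_pow]
  refine Finset.prod_congr rfl fun j _ ↦ ?_
  rw [one_sub_discMoebius_mul_conj (one_sub_mul_conj_ne_zero (hv j) (hb j))
    (one_sub_mul_conj_ne_zero (hw j) (hb j))]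

lemma bergmanDenom_discMoebius_neg (hb : b ∈ unitPolydisk ι) (hw : w ∈ unitPolydisk ι) :
    bergmanDenom n b (fun j ↦ discMoebius (-b j) (w j)) =
      bergmanDenom n b b / bergmanDenom n (-b) w := by
  have hb' : -b ∈ unitPolydisk ι := fun j ↦ by simpa using hb j
  have hb₀ : (fun j ↦ discMoebius ((-b) j) ((0 : ι → ℂ) j)) = b := by
    ext j
    simp [discMoebius]
  have h := bergmanDenom_discMoebius (n := n) hb' zero_mem_unitPolydisk hw
  rw [hb₀] at h
  simpa [bergmanDenom] using h

lemma bergmanDenom_self_eq_sq (n : ι → ℕ) (hb : b ∈ unitPolydisk ι) :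
    bergmanDenom n b b = ((∏ j, (1 - ‖b j‖ ^ 2) ^ ((n j : ℝ) / 2) : ℝ) : ℂ) ^ 2 := by
  simp only [bergmanDenom, ofReal_prod, ← Finset.prod_pow]
  refine Finset.prod_congr rfl fun j _ ↦ ?_
  have hpos : 0 ≤ 1 - ‖b j‖ ^ 2 := by nlinarith [hb j, norm_nonneg (b j)]
  rw [← ofReal_pow, ← Real.rpow_mul_natCast hpos, Nat.cast_ofNat, div_mul_cancel₀ _ two_ne_zero,
    Real.rpow_natCast, mul_conj']
  push_cast
  rfl

variable {f : (ι → ℂ) → ℂ} {g : (ι → ℂ) → ι → ℂ}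

lemma bergmanDenom_comp_eq_of_inv_eq (hg : Set.MapsTo g (unitPolydisk ι) (unitPolydisk ι))
    (heq : ∀ z ∈ unitPolydisk ι, ∀ u ∈ unitPolydisk ι,
      conj (f z) * f u * (bergmanDenom n (g z) (g u))⁻¹ = (bergmanDenom n z u)⁻¹)
    {z u : ι → ℂ} (hz : z ∈ unitPolydisk ι) (hu : u ∈ unitPolydisk ι) :
    bergmanDenom n (g z) (g u) = conj (f z) * f u * bergmanDenom n z u := by
  have h := heq z hz u hu
  rwa [← div_eq_mul_inv, div_eq_iff (bergmanDenom_ne_zero (hg hz) (hg hu)),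
    eq_inv_mul_iff_mul_eq₀ (bergmanDenom_ne_zero hz hu), mul_comm, eq_comm] at h

lemma bergmanDenom_discMoebius_comp
    (hg : Set.MapsTo g (unitPolydisk ι) (unitPolydisk ι))
    (heq : ∀ z ∈ unitPolydisk ι, ∀ u ∈ unitPolydisk ι,
      bergmanDenom n (g z) (g u) = conj (f z) * f u * bergmanDenom n z u)
    {z u : ι → ℂ} (hz : z ∈ unitPolydisk ι) (hu : u ∈ unitPolydisk ι) :
    bergmanDenom n (fun j ↦ discMoebius (g 0 j) (g z j)) (fun j ↦ discMoebius (g 0 j) (g u j)) =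
      bergmanDenom n z u := by
  have h0 := zero_mem_unitPolydisk (ι := ι)
  have hf : ∀ v ∈ unitPolydisk ι, f v ≠ 0 := fun v hv ↦ right_ne_zero_of_mul
    (left_ne_zero_of_mul (heq v hv v hv ▸ bergmanDenom_ne_zero (hg hv) (hg hv)))
  have hcf : ∀ v ∈ unitPolydisk ι, conj (f v) ≠ 0 := fun v hv ↦ (map_ne_zero _).2 (hf v hv)
  rw [bergmanDenom_discMoebius (hg h0) (hg hz) (hg hu), heq 0 h0 0 h0, heq z hz u hu,
    heq 0 h0 u hu, heq z hz 0 h0, bergmanDenom_zero_left, bergmanDenom_zero_left,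
    ← conj_bergmanDenom n 0 z, bergmanDenom_zero_left, map_one]
  field_simp [hf 0 h0, hf u hu, hcf 0 h0, hcf z hz]

lemma apply_eq_div_bergmanDenom (hg : Set.MapsTo g (unitPolydisk ι) (unitPolydisk ι))
    (heq : ∀ z ∈ unitPolydisk ι, ∀ u ∈ unitPolydisk ι,
      bergmanDenom n (g z) (g u) = conj (f z) * f u * bergmanDenom n z u)
    {z : ι → ℂ} (hz : z ∈ unitPolydisk ι) (hw : w ∈ unitPolydisk ι)
    (hgz : g z = fun j ↦ discMoebius (-g 0 j) (w j)) :
    f z = f 0 / bergmanDenom n (-g 0) w := by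
  have h0 := zero_mem_unitPolydisk (ι := ι)
  have hf₀ : conj (f 0) * f 0 = bergmanDenom n (g 0) (g 0) := by simp [heq 0 h0 0 h0]
  have hf₀_ne : conj (f 0) ≠ 0 :=
    left_ne_zero_of_mul (hf₀ ▸ bergmanDenom_ne_zero (hg h0) (hg h0))
  refine mul_left_cancel₀ hf₀_ne ?_
  rw [← mul_div_assoc, hf₀, ← bergmanDenom_discMoebius_neg (hg h0) hw, ← hgz, heq 0 h0 z hz,
    bergmanDenom_zero_left, mul_one]

lemma exists_unimodular_mul_of_mul_conj_eq {F : ℂ} {R : ℝ} (hR : 0 < R)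
    (hF : conj F * F = (R : ℂ) ^ 2) :
    ∃ c : ℂ, ‖c‖ = 1 ∧ F = c * R := by
  have hnorm : ‖F‖ = R := by
    rw [mul_comm, mul_conj'] at hF
    exact (pow_left_inj₀ (norm_nonneg F) hR.le two_ne_zero).1 (by exact_mod_cast hF)
  refine ⟨F / R, ?_, (div_mul_cancel₀ _ (by exact_mod_cast hR.ne')).symm⟩
  rw [norm_div, hnorm, norm_real, Real.norm_of_nonneg hR.le, div_self hR.ne']

end Normalisation

theorem stmt_15_general {ι : Type*} [Fintype ι] {n : ι → ℕ} (hn : ∀ j, n j ≠ 0)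
    {f : (ι → ℂ) → ℂ} {g : (ι → ℂ) → ι → ℂ}
    (hg : Set.MapsTo g (unitPolydisk ι) (unitPolydisk ι))
    (hfg : ∀ z ∈ unitPolydisk ι, ∀ u ∈ unitPolydisk ι,
      conj (f z) * f u * (bergmanDenom n (g z) (g u))⁻¹ = (bergmanDenom n z u)⁻¹) :
    ∃ (c : ℂ) (a : ι → ℂ) (θ : ι → ℂ) (φ : Equiv.Perm ι),
      ‖c‖ = 1 ∧ (∀ κ, ‖a κ‖ = 1) ∧ (∀ j, ‖θ j‖ < 1) ∧
      (∀ z ∈ unitPolydisk ι, f z = c * ∏ j, (((1 - ‖θ j‖ ^ 2) ^ ((n j : ℝ) / 2) : ℝ) : ℂ) /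
          (1 - a j * conj (θ j) * z (φ j)) ^ n j) ∧
      (∀ z ∈ unitPolydisk ι, ∀ κ,
        g z κ = a κ * (conj (a κ) * θ κ - z (φ κ)) / (1 - a κ * conj (θ κ) * z (φ κ))) := by
  have h0 := zero_mem_unitPolydisk (ι := ι)
  have hg₀ := hg h0
  have heq : ∀ z ∈ unitPolydisk ι, ∀ u ∈ unitPolydisk ι,
      bergmanDenom n (g z) (g u) = conj (f z) * f u * bergmanDenom n z u :=
    fun z hz u hu ↦ bergmanDenom_comp_eq_of_inv_eq hg hfg hz hu
  obtain ⟨α, φ, hα, hh⟩ := exists_perm_of_bergmanDenom_eq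
    (h := fun z j ↦ discMoebius (g 0 j) (g z j)) hn
    (fun z hz j ↦ norm_discMoebius_lt_one (hg₀ j) (hg hz j)) (by ext; simp [discMoebius])
    (fun z hz u hu ↦ bergmanDenom_discMoebius_comp hg heq hz hu)
  have hgz : ∀ z ∈ unitPolydisk ι, g z = fun j ↦ discMoebius (-g 0 j) (α j * z (φ j)) := by
    intro z hz
    ext j
    rw [← hh z hz j, discMoebius_neg_discMoebius (hg₀ j)
      (one_sub_mul_conj_ne_zero (hg hz j) (hg₀ j))]
  set R := ∏ j, (1 - ‖g 0 j‖ ^ 2) ^ ((n j : ℝ) / 2)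
  have hR : 0 < R := Finset.prod_pos fun j _ ↦
    Real.rpow_pos_of_pos (by nlinarith [hg₀ j, norm_nonneg (g 0 j)]) _
  obtain ⟨c, hc, hf₀⟩ := exists_unimodular_mul_of_mul_conj_eq (F := f 0) hR
    (by rw [← bergmanDenom_self_eq_sq n hg₀, heq 0 h0 0 h0]; simp)
  refine ⟨c, -α, g 0, φ, hc, by simpa using hα, hg₀, fun z hz ↦ ?_, fun z hz κ ↦ ?_⟩
  · have hw : (fun j ↦ α j * z (φ j)) ∈ unitPolydisk ι := fun j ↦ by simpa [hα j] using hz (φ j)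
    rw [apply_eq_div_bergmanDenom hg heq hz hw (hgz z hz), hf₀, Finset.prod_div_distrib,
      ← ofReal_prod, mul_div_assoc]
    simp [bergmanDenom, mul_right_comm, R]
  · have hα_conj : α κ * conj (α κ) = 1 := by simp [mul_conj', hα κ]
    rw [congrFun (hgz z hz) κ, discMoebius]
    congr 1
    · simp only [Pi.neg_apply, map_neg]
      linear_combination -g 0 κ * hα_conj
    · simp only [Pi.neg_apply, map_neg]
      ring

theorem stmt_15 (d : ℕ) (hd : 1 ≤ d) (ℓ : Fin d → ℕ)
    (f : (Fin d → ℂ) → ℂ) (g : (Fin d → ℂ) → Fin d → ℂ)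
    (hf : AnalyticOnNhd ℂ f {z : Fin d → ℂ | ∀ j, ‖z j‖ < 1})
    (hg : AnalyticOnNhd ℂ g {z : Fin d → ℂ | ∀ j, ‖z j‖ < 1})
    (hgmap : ∀ z ∈ {z : Fin d → ℂ | ∀ j, ‖z j‖ < 1}, ∀ κ, ‖g z κ‖ < 1)
    (K : (Fin d → ℂ) → (Fin d → ℂ) → ℂ)
    (hK : ∀ w u : Fin d → ℂ, K w u = ∏ j, ((1 - u j * conj (w j)) ^ (ℓ j + 2))⁻¹)
    (heq : ∀ z ∈ {z : Fin d → ℂ | ∀ j, ‖z j‖ < 1},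
      ∀ u ∈ {u : Fin d → ℂ | ∀ j, ‖u j‖ < 1},
        conj (f z) * f u * K (g z) (g u) = K z u) :
    ∃ (c : ℂ) (a : Fin d → ℂ) (θ : Fin d → ℂ) (φ : Equiv.Perm (Fin d)),
      ‖c‖ = 1 ∧ (∀ κ, ‖a κ‖ = 1) ∧ (∀ j, ‖θ j‖ < 1) ∧
      (∀ z ∈ {z : Fin d → ℂ | ∀ j, ‖z j‖ < 1},
        f z = c * ∏ j, (((1 - ‖θ j‖ ^ 2) ^ ((1 : ℝ) + (ℓ j : ℝ) / 2) : ℝ) : ℂ) /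
          (1 - a j * conj (θ j) * z (φ j)) ^ (ℓ j + 2)) ∧
      (∀ z ∈ {z : Fin d → ℂ | ∀ j, ‖z j‖ < 1}, ∀ κ,
        g z κ = a κ * (conj (a κ) * θ κ - z (φ κ)) / (1 - a κ * conj (θ κ) * z (φ κ))) := by
  have hexp : ∀ j, (1 : ℝ) + ℓ j / 2 = (ℓ j + 2 : ℕ) / 2 := fun j ↦ by push_cast; ring
  simp only [hK, Finset.prod_inv_distrib] at heq
  simp only [hexp]
  exact stmt_15_general (n := fun j ↦ ℓ j + 2) (by simp) hgmap heq
end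

section
/- Let d ≥ 1, ℓ ∈ ℤ_{≥0}^d, let {U₁, U₂} be a partition of {1,…,d}, and let q_j ∈ 𝕋 for j ∈ U₂. Let f(z) = c·∏_{j=1}^d (1 − z_j·conj(w_j))^{−(ℓ_j+2)} for some c ∈ ℂ and w ∈ 𝔻^d, and let g = (g₁,…,g_d) : 𝔻^d → 𝔻^d be such that each g_κ depends only on z_κ and: for κ ∈ U₁, either g_κ is constant with value in 𝔻, or g_κ(z) = G_κ + E_κ/(z_κ + F_κ) with E_κ ≠ 0 and |(G_κ·F_κ + E_κ)·conj(F_κ) − G_κ| + |E_κ| ≤ |F_κ|² − 1; for κ ∈ U₂, either g_κ is constant with value in 𝔻, or g_κ(z) = α_κ + β_κ·q_κ·z_κ/(1 − α_κ·q_κ·z_κ) with β_κ ≠ 0 and |α_κ + conj(α_κ)·(β_κ − α_κ²)| + |β_κ| ≤ 1 − |α_κ|². Then there exists a constant R > 0 such that for every analytic function h : 𝔻^d → ℂ, ∫_{𝔻^d} |f(z)·h(g(z))|² ∏_{j=1}^d (1+ℓ_j)(1−|z_j|²)^{ℓ_j} dA(z₁)⋯dA(z_d) ≤ R·∫_{𝔻^d}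 |h(x)|² ∏_{j=1}^d (1+ℓ_j)(1−|x_j|²)^{ℓ_j} dA(x₁)⋯dA(x_d) (as an inequality in [0,∞]). -/
open MeasureTheory Complex ComplexConjugate

/-- The normalized area measure on `ℂ` (planar Lebesgue measure divided by `π`). -/
noncomputable def dA : Measure ℂ := (ENNReal.ofReal Real.pi)⁻¹ • volume

/-!
Because `f` is bounded on the polydisc and each `g_κ` is a holomorphic self-map `φ` of the disc in
the variable `z_κ`, Fubini reduces the estimate to the boundedness of the composition operator
`u ↦ u ∘ φ` on a weighted Bergman space of the disc, applied to one coordinate at a time.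

When `φ 0 = 0` this operator is a contraction (Littlewood subordination). On a circle of radius `s`,
`‖u ^ 2‖` has a harmonic majorant inside, its Poisson integral, which is the real part of a
holomorphic `H`. By the Schwarz lemma `φ` maps the circle of radius `r < s` into the disc of radius
`s`, so the mean of `‖u ∘ φ‖ ^ 2` over the former is at most `(H (φ 0)).re = (H 0).re`, the mean of
`‖u‖ ^ 2` over the latter. Let `s → r` and integrate in `r` against the radial weight. In general,
`φ` is a disc automorphism composed with a self-map fixing `0`, and the automorphism distorts the
weighted area measure by a bounded factor.
-/

open Metric Set Real InnerProductSpace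

section LittlewoodSubordination

variable {E : Type*} [NormedAddCommGroup E]

theorem norm_circleAverage_le [NormedSpace ℝ E] (f : ℂ → E) (c : ℂ) (R : ℝ) :
    ‖circleAverage f c R‖ ≤ circleAverage (fun z ↦ ‖f z‖) c R := by
  simp only [circleAverage, norm_smul, smul_eq_mul, norm_inv, Real.norm_of_nonneg two_pi_pos.le]
  gcongr
  exact intervalIntegral.norm_integral_le_integral_norm two_pi_pos.le

theorem poissonKernel_nonneg_on_sphere {c w z : ℂ} {R : ℝ} (hw : w ∈ ball c R)
    (hz : z ∈ sphere c R) : 0 ≤ poissonKernel c w z := by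
  rw [mem_sphere, dist_eq_norm] at hz
  rw [mem_ball, dist_eq_norm] at hw
  rw [poissonKernel_def, hz]
  have : ‖w - c‖ ^ 2 ≤ R ^ 2 := by gcongr
  exact div_nonneg (sub_nonneg.2 this) (by positivity)

variable [NormedSpace ℂ E] [CompleteSpace E]

theorem norm_le_circleAverage_poissonKernel_mul_norm {v : ℂ → E} {c w : ℂ} {R : ℝ}
    (hv : DiffContOnCl ℂ v (ball c R)) (hw : w ∈ ball c R) :
    ‖v w‖ ≤ circleAverage (fun z ↦ poissonKernel c w z * ‖v z‖) c R := by
  have hR : |R| = R := abs_of_pos (pos_of_mem_ball hw)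
  calc ‖v w‖ = ‖circleAverage (poissonKernel c w • v) c R‖ := by
        rw [hv.circleAverage_poissonKernel_smul hw]
    _ ≤ circleAverage (fun z ↦ ‖(poissonKernel c w • v) z‖) c R := norm_circleAverage_le ..
    _ = circleAverage (fun z ↦ poissonKernel c w z * ‖v z‖) c R := by
        refine circleAverage_congr_sphere fun z hz ↦ ?_
        rw [hR] at hz
        simp [norm_smul, abs_of_nonneg (poissonKernel_nonneg_on_sphere hw hz)]

theorem exists_differentiableOn_norm_le_re {v : ℂ → E} {s : ℝ} (hs : 0 < s)
    (hv : DiffContOnCl ℂ v (ball 0 s)) :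
    ∃ H : ℂ → ℂ, DifferentiableOn ℂ H (ball 0 s) ∧ (∀ w ∈ ball 0 s, ‖v w‖ ≤ (H w).re) ∧
      (H 0).re = circleAverage (fun z ↦ ‖v z‖) 0 s := by
  have hnorm : ContinuousOn (fun z ↦ ‖v z‖) (sphere 0 s) :=
    hv.continuousOn_ball.norm.mono sphere_subset_closedBall
  have hre (w : ℂ) (hw : w ∈ ball 0 s) :
      (circleAverage (fun ζ ↦ herglotzRieszKernel 0 w ζ • (‖v ζ‖ : ℂ)) 0 s).re =
        circleAverage (fun ζ ↦ poissonKernel 0 w ζ * ‖v ζ‖) 0 s := by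
    rw [re_circleAverage_herglotzRieszKernel_smul (hnorm.circleIntegrable hs.le) hw,
      ← poissonKernel_eq_re_herglotzRieszKernel]
    rfl
  refine ⟨_, differentiableOn_circleAverage_herglotzRieszKernel_smul
    ((continuous_ofReal.comp_continuousOn hnorm).circleIntegrable hs.le), fun w hw ↦ ?_, ?_⟩
  · exact (norm_le_circleAverage_poissonKernel_mul_norm hv hw).trans_eq (hre w hw).symm
  · refine (hre 0 (mem_ball_self hs)).trans (circleAverage_congr_sphere fun z hz ↦ ?_)
    have hz : ‖z‖ = s := by simpa [abs_of_pos hs] using hz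
    simp [poissonKernel_def, hz, hs.ne']

theorem circleAverage_norm_comp_le_of_mapsTo {v : ℂ → E} {ψ : ℂ → ℂ} {r s : ℝ} (hr : 0 < r)
    (hv : DiffContOnCl ℂ v (ball 0 s)) (hψ : DiffContOnCl ℂ ψ (ball 0 r))
    (hmaps : MapsTo ψ (closedBall 0 r) (ball 0 s)) (hψ0 : ψ 0 = 0) :
    circleAverage (fun z ↦ ‖v (ψ z)‖) 0 r ≤ circleAverage (fun z ↦ ‖v z‖) 0 s := by
  have hs : 0 < s := pos_of_mem_ball (hmaps (mem_closedBall_self hr.le))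
  obtain ⟨H, hH, hvH, hH0⟩ := exists_differentiableOn_norm_le_re hs hv
  have hmaps_sphere : MapsTo ψ (sphere 0 r) (ball 0 s) := hmaps.mono_left sphere_subset_closedBall
  have hψ_sphere : ContinuousOn ψ (sphere 0 r) :=
    hψ.continuousOn_ball.mono sphere_subset_closedBall
  have hv_int : CircleIntegrable (fun z ↦ ‖v (ψ z)‖) 0 r :=
    ((hv.differentiableOn.continuousOn.comp hψ_sphere hmaps_sphere).norm).circleIntegrable hr.le
  have hHψ_sphere : ContinuousOn (H ∘ ψ) (sphere 0 r) :=
    hH.continuousOn.comp hψ_sphere hmaps_sphere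
  have hHψ : DiffContOnCl ℂ (H ∘ ψ) (ball 0 |r|) := by
    rw [abs_of_pos hr]
    exact ⟨hH.comp hψ.differentiableOn (hmaps.mono_left ball_subset_closedBall),
      hH.continuousOn.comp hψ.continuousOn (hmaps.mono_left closure_ball_subset_closedBall)⟩
  calc circleAverage (fun z ↦ ‖v (ψ z)‖) 0 r
      ≤ circleAverage (reCLM ∘ H ∘ ψ) 0 r := by
        refine circleAverage_mono hv_int
          ((reCLM.continuous.comp_continuousOn hHψ_sphere).circleIntegrable hr.le) fun z hz ↦ ?_
        rw [abs_of_pos hr] at hz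
        exact hvH _ (hmaps_sphere hz)
    _ = (H 0).re := by
        rw [reCLM.circleAverage_comp_comm (hHψ_sphere.circleIntegrable hr.le), hHψ.circleAverage,
          Function.comp_apply, hψ0, reCLM_apply]
    _ = circleAverage (fun z ↦ ‖v z‖) 0 s := hH0

theorem circleAverage_norm_comp_le {v : ℂ → E} {ψ : ℂ → ℂ} {r R : ℝ} (hr : 0 < r) (hrR : r < R)
    (hv : DifferentiableOn ℂ v (ball 0 R)) (hψ : DifferentiableOn ℂ ψ (ball 0 R))
    (hmaps : MapsTo ψ (ball 0 R) (ball 0 R)) (hψ0 : ψ 0 = 0) :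
    circleAverage (fun z ↦ ‖v (ψ z)‖) 0 r ≤ circleAverage (fun z ↦ ‖v z‖) 0 r := by
  have hcont : ContinuousOn (circleAverage (fun z ↦ ‖v z‖) 0) (Ico 0 R) :=
    ContinuousOn.circleAverage (hv.continuousOn.norm.mono fun z hz ↦ by simpa using hz.2)
      fun r hr ↦ hr.1
  have hlim : Filter.Tendsto (circleAverage (fun z ↦ ‖v z‖) 0) (nhdsWithin r (Ioo r R))
      (nhds (circleAverage (fun z ↦ ‖v z‖) 0 r)) :=
    (hcont r ⟨hr.le, hrR⟩).mono_left (nhdsWithin_mono _ fun s hs ↦ ⟨(hr.trans hs.1).le, hs.2⟩)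
  have : (nhdsWithin r (Ioo r R)).NeBot := left_nhdsWithin_Ioo_neBot hrR
  refine ge_of_tendsto hlim (eventually_mem_nhdsWithin.mono fun s hs ↦ ?_)
  refine circleAverage_norm_comp_le_of_mapsTo hr
    (hv.diffContOnCl_ball (closedBall_subset_ball hs.2))
    (hψ.diffContOnCl_ball (closedBall_subset_ball hrR)) (fun z hz ↦ ?_) hψ0
  have hzr : ‖z‖ ≤ r := by simpa using hz
  have := norm_le_norm_of_mapsTo_ball hψ (hmaps.mono_right ball_subset_closedBall) hψ0
    (hzr.trans_lt hrR)
  simpa using (this.trans hzr).trans_lt hs.1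

theorem circleAverage_norm_sq_comp_le {u ψ : ℂ → ℂ} {r R : ℝ} (hr : 0 < r) (hrR : r < R)
    (hu : DifferentiableOn ℂ u (ball 0 R)) (hψ : DifferentiableOn ℂ ψ (ball 0 R))
    (hmaps : MapsTo ψ (ball 0 R) (ball 0 R)) (hψ0 : ψ 0 = 0) :
    circleAverage (fun z ↦ ‖u (ψ z)‖ ^ 2) 0 r ≤ circleAverage (fun z ↦ ‖u z‖ ^ 2) 0 r := by
  simpa only [Pi.pow_apply, norm_pow] using
    circleAverage_norm_comp_le hr hrR (hu.pow 2) hψ hmaps hψ0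

end LittlewoodSubordination

section PolarCoordinates

theorem lintegral_eq_lintegral_lintegral_circleMap {f : ℂ → ENNReal} (hf : Measurable f) :
    ∫⁻ z, f z =
      ∫⁻ r in Ioi (0 : ℝ), ENNReal.ofReal r * ∫⁻ θ in Ioo (-π) π, f (circleMap 0 r θ) := by
  have hsymm (p : ℝ × ℝ) : Complex.polarCoord.symm p = circleMap 0 p.1 p.2 := by
    rw [Complex.polarCoord_symm_apply, circleMap, exp_mul_I, ofReal_cos, ofReal_sin, zero_add]
  have : Measurable fun p : ℝ × ℝ ↦ f (circleMap 0 p.1 p.2) :=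
    hf.comp (by unfold circleMap; fun_prop)
  rw [← Complex.lintegral_comp_polarCoord_symm, polarCoord_target, Measure.volume_eq_prod,
    ← Measure.prod_restrict]
  simp only [hsymm, smul_eq_mul]
  rw [lintegral_prod _ (by fun_prop)]
  simp only [lintegral_const_mul' _ _ ENNReal.ofReal_ne_top]

theorem setLIntegral_ball_eq_lintegral_lintegral_circleMap {f : ℂ → ENNReal} (hf : Measurable f)
    (R : ℝ) :
    ∫⁻ z in ball 0 R, f z =
      ∫⁻ r in Ioo 0 R, ENNReal.ofReal r * ∫⁻ θ in Ioo (-π) π, f (circleMap 0 r θ) := by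
  have hind : ∀ r ∈ Ioi (0 : ℝ),
      ENNReal.ofReal r * ∫⁻ θ in Ioo (-π) π, (ball 0 R).indicator f (circleMap 0 r θ) =
        (Iio R).indicator
          (fun r ↦ ENNReal.ofReal r * ∫⁻ θ in Ioo (-π) π, f (circleMap 0 r θ)) r := fun r hr ↦ by
    by_cases hrR : r < R <;> simp [indicator, abs_of_pos (mem_Ioi.1 hr), hrR]
  rw [← lintegral_indicator measurableSet_ball,
    lintegral_eq_lintegral_lintegral_circleMap (hf.indicator measurableSet_ball),
    setLIntegral_congr_fun measurableSet_Ioi hind, setLIntegral_indicator measurableSet_Iio,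
    inter_comm, Ioi_inter_Iio]

theorem lintegral_circleMap_eq_circleAverage {F : ℂ → ℝ} {c : ℂ} {r : ℝ}
    (hF : CircleIntegrable F c r) (hF0 : ∀ z ∈ sphere c |r|, 0 ≤ F z) :
    ∫⁻ θ in Ioo (-π) π, ENNReal.ofReal (F (circleMap c r θ)) =
      ENNReal.ofReal (2 * π * circleAverage F c r) := by
  have hperiodic : Function.Periodic (fun θ ↦ F (circleMap c r θ)) (2 * π) :=
    fun θ ↦ by simp only [periodic_circleMap c r θ]
  have hint : IntegrableOn (fun θ ↦ F (circleMap c r θ)) (Ioo (-π) π) := by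
    have := hperiodic.intervalIntegrable₀ two_pi_pos.ne' hF (-π) π
    rwa [intervalIntegrable_iff_integrableOn_Ioo_of_le (by linarith [pi_pos])] at this
  have havg : 2 * π * circleAverage F c r = ∫ θ in Ioo (-π) π, F (circleMap c r θ) := by
    rw [circleAverage_def, smul_eq_mul, mul_inv_cancel_left₀ two_pi_pos.ne',
      ← zero_add (2 * π), hperiodic.intervalIntegral_add_eq 0 (-π),
      intervalIntegral.integral_of_le (by linarith [pi_pos]), integral_Ioc_eq_integral_Ioo,
      show -π + 2 * π = π by ring]
  rw [havg, ofReal_integral_eq_lintegral_ofReal hint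
    (Filter.Eventually.of_forall fun θ ↦ hF0 _ (circleMap_mem_sphere' c r θ))]

theorem measurable_indicator_of_continuousOn {α β : Type*} [TopologicalSpace α] [MeasurableSpace α]
    [OpensMeasurableSpace α] [TopologicalSpace β] [MeasurableSpace β] [BorelSpace β] [Zero β]
    {f : α → β} {s : Set α} (hf : ContinuousOn f s) (hs : MeasurableSet s) :
    Measurable (s.indicator f) := by
  classical
  rw [← piecewise_eq_indicator]
  exact hf.measurable_piecewise continuousOn_const hs

theorem setLIntegral_ball_radial_mul_eq {W : ℝ → ENNReal} (hW : Measurable W) {F : ℂ → ℝ} {R : ℝ}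
    (hF : ContinuousOn F (ball 0 R)) (hF0 : ∀ z ∈ ball 0 R, 0 ≤ F z) :
    ∫⁻ z in ball 0 R, W ‖z‖ * ENNReal.ofReal (F z) =
      ∫⁻ r in Ioo 0 R, ENNReal.ofReal r * (W r * ENNReal.ofReal (2 * π * circleAverage F 0 r)) := by
  set F' : ℂ → ℝ := (ball 0 R).indicator F
  have hF' : Measurable F' := measurable_indicator_of_continuousOn hF measurableSet_ball
  have hFF' : EqOn F' F (ball 0 R) := eqOn_indicator
  have hsphere : ∀ r ∈ Ioo 0 R, sphere 0 |r| ⊆ ball (0 : ℂ) R := fun r hr ↦ by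
    rw [abs_of_pos hr.1]
    exact sphere_subset_ball hr.2
  calc ∫⁻ z in ball 0 R, W ‖z‖ * ENNReal.ofReal (F z)
      = ∫⁻ z in ball 0 R, W ‖z‖ * ENNReal.ofReal (F' z) :=
        setLIntegral_congr_fun measurableSet_ball fun z hz ↦ by simp only [hFF' hz]
    _ = ∫⁻ r in Ioo 0 R, ENNReal.ofReal r *
          ∫⁻ θ in Ioo (-π) π, W ‖circleMap 0 r θ‖ * ENNReal.ofReal (F' (circleMap 0 r θ)) :=
        setLIntegral_ball_eq_lintegral_lintegral_circleMap (by fun_prop) R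
    _ = ∫⁻ r in Ioo 0 R, ENNReal.ofReal r *
          (W r * ENNReal.ofReal (2 * π * circleAverage F 0 r)) := by
        refine setLIntegral_congr_fun measurableSet_Ioo fun r hr ↦ ?_
        have hmeas : Measurable fun θ ↦ ENNReal.ofReal (F' (circleMap 0 r θ)) :=
          (hF'.comp (continuous_circleMap 0 r).measurable).ennreal_ofReal
        simp only [norm_circleMap_zero, abs_of_pos hr.1]
        rw [lintegral_const_mul _ hmeas]
        simp only [hFF' (hsphere r hr (circleMap_mem_sphere' 0 r _))]
        rw [lintegral_circleMap_eq_circleAverage (hF.mono (hsphere r hr)).circleIntegrable'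
          fun z hz ↦ hF0 z (hsphere r hr hz)]

theorem setLIntegral_ball_radial_mul_le {W : ℝ → ENNReal} (hW : Measurable W) {F G : ℂ → ℝ} {R : ℝ}
    (hF : ContinuousOn F (ball 0 R)) (hF0 : ∀ z ∈ ball (0 : ℂ) R, 0 ≤ F z)
    (hG : ContinuousOn G (ball 0 R)) (hG0 : ∀ z ∈ ball (0 : ℂ) R, 0 ≤ G z)
    (hFG : ∀ r ∈ Ioo 0 R, circleAverage F 0 r ≤ circleAverage G 0 r) :
    ∫⁻ z in ball 0 R, W ‖z‖ * ENNReal.ofReal (F z) ≤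
      ∫⁻ z in ball 0 R, W ‖z‖ * ENNReal.ofReal (G z) := by
  rw [setLIntegral_ball_radial_mul_eq hW hF hF0, setLIntegral_ball_radial_mul_eq hW hG hG0]
  refine setLIntegral_mono' measurableSet_Ioo fun r hr ↦ ?_
  gcongr ENNReal.ofReal r * (W r * ENNReal.ofReal (2 * π * ?_))
  exact hFG r hr

end PolarCoordinates

section ChangeOfVariables

theorem det_restrictScalars_toSpanSingleton (c : ℂ) :
    ((ContinuousLinearMap.toSpanSingleton ℂ c).restrictScalars ℝ).det = ‖c‖ ^ 2 := by
  have : (((ContinuousLinearMap.toSpanSingleton ℂ c).restrictScalars ℝ : ℂ →L[ℝ] ℂ) : ℂ →ₗ[ℝ] ℂ) =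
      Algebra.lmul ℝ ℂ c := by
    ext; simp [mul_comm]
  rw [ContinuousLinearMap.det, this, ← Algebra.norm_apply, Algebra.norm_complex_apply,
    normSq_eq_norm_sq]

theorem setLIntegral_image_eq_setLIntegral_enorm_deriv_sq_mul {s : Set ℂ} {f f' : ℂ → ℂ}
    (hs : MeasurableSet s) (hf : ∀ z ∈ s, HasDerivWithinAt f (f' z) s z) (hinj : InjOn f s)
    (G : ℂ → ENNReal) :
    ∫⁻ z in f '' s, G z = ∫⁻ z in s, ‖f' z‖ₑ ^ 2 * G (f z) := by
  rw [lintegral_image_eq_lintegral_abs_det_fderiv_mul volume hs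
    (fun z hz ↦ (hf z hz).hasFDerivWithinAt.restrictScalars ℝ) hinj]
  simp only [det_restrictScalars_toSpanSingleton, abs_pow, abs_norm,
    ENNReal.ofReal_pow (norm_nonneg _), ofReal_norm]

end ChangeOfVariables

section DiscAutomorphism

/-- The automorphism `z ↦ (z + a) / (1 + ā z)` of the unit disc, which moves `0` to `a`. -/
noncomputable def discAut (a z : ℂ) : ℂ := (z + a) / (1 + conj a * z)

variable {a z : ℂ}

theorem one_add_conj_mul_ne_zero (ha : ‖a‖ < 1) (hz : ‖z‖ < 1) : 1 + conj a * z ≠ 0 := by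
  intro h
  have : ‖a‖ * ‖z‖ = 1 := by
    rw [← norm_conj a, ← norm_mul, eq_neg_of_add_eq_zero_right h, norm_neg, norm_one]
  nlinarith [norm_nonneg a, norm_nonneg z]

theorem one_sub_norm_discAut_sq (ha : ‖a‖ < 1) (hz : ‖z‖ < 1) :
    1 - ‖discAut a z‖ ^ 2 = (1 - ‖a‖ ^ 2) / ‖1 + conj a * z‖ ^ 2 * (1 - ‖z‖ ^ 2) := by
  have hne : ‖1 + conj a * z‖ ^ 2 ≠ 0 :=
    pow_ne_zero 2 (norm_ne_zero_iff.2 (one_add_conj_mul_ne_zero ha hz))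
  have hid : ‖1 + conj a * z‖ ^ 2 - ‖z + a‖ ^ 2 = (1 - ‖a‖ ^ 2) * (1 - ‖z‖ ^ 2) := by
    simp only [← normSq_eq_norm_sq, normSq_apply, add_re, add_im, mul_re, mul_im, one_re, one_im,
      conj_re, conj_im]
    ring
  rw [discAut, norm_div, div_pow, one_sub_div hne, hid, div_mul_eq_mul_div]

theorem mapsTo_discAut (ha : ‖a‖ < 1) : MapsTo (discAut a) (ball 0 1) (ball 0 1) := by
  intro z hz
  have hz : ‖z‖ < 1 := mem_ball_zero_iff.1 hz
  have hsq {t : ℝ} (ht : t < 1) (ht0 : 0 ≤ t) : 0 < 1 - t ^ 2 :=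
    sub_pos.2 (pow_lt_one₀ ht0 ht two_ne_zero)
  have hpos : 0 < 1 - ‖discAut a z‖ ^ 2 := by
    rw [one_sub_norm_discAut_sq ha hz]
    have := norm_pos_iff.2 (one_add_conj_mul_ne_zero ha hz)
    have := hsq ha (norm_nonneg a)
    have := hsq hz (norm_nonneg z)
    positivity
  exact mem_ball_zero_iff.2 ((sq_lt_one_iff₀ (norm_nonneg _)).1 (sub_pos.1 hpos))

theorem discAut_neg_discAut (ha : ‖a‖ < 1) (hz : ‖z‖ < 1) : discAut (-a) (discAut a z) = z := by
  have hne := one_add_conj_mul_ne_zero ha hz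
  have hne' : 1 - conj a * a ≠ 0 := by
    simpa [sub_eq_add_neg] using one_add_conj_mul_ne_zero ha (z := -a) (by simpa)
  have hnum : (z + a) / (1 + conj a * z) + -a = z * (1 - conj a * a) / (1 + conj a * z) := by
    rw [div_add' _ _ _ hne]
    ring
  have hden : 1 + conj (-a) * ((z + a) / (1 + conj a * z)) =
      (1 - conj a * a) / (1 + conj a * z) := by
    rw [mul_div_assoc', add_comm, div_add' _ _ _ hne, map_neg]
    ring
  rw [discAut, discAut, hnum, hden, div_div_div_cancel_right₀ hne, mul_div_cancel_right₀ _ hne']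

theorem leftInvOn_discAut_neg (ha : ‖a‖ < 1) : LeftInvOn (discAut (-a)) (discAut a) (ball 0 1) :=
  fun _ hz ↦ discAut_neg_discAut ha (mem_ball_zero_iff.1 hz)

theorem rightInvOn_discAut_neg (ha : ‖a‖ < 1) :
    RightInvOn (discAut (-a)) (discAut a) (ball 0 1) := by
  simpa [RightInvOn] using leftInvOn_discAut_neg (a := -a) (by simpa)

theorem bijOn_discAut (ha : ‖a‖ < 1) : BijOn (discAut a) (ball 0 1) (ball 0 1) :=
  InvOn.bijOn ⟨leftInvOn_discAut_neg ha, rightInvOn_discAut_neg ha⟩ (mapsTo_discAut ha)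
    (mapsTo_discAut (by simpa))

theorem hasDerivAt_discAut (ha : ‖a‖ < 1) (hz : ‖z‖ < 1) :
    HasDerivAt (discAut a) ((1 - conj a * a) / (1 + conj a * z) ^ 2) z := by
  have := ((hasDerivAt_id z).add_const a).div (((hasDerivAt_id z).const_mul (conj a)).const_add 1)
    (one_add_conj_mul_ne_zero ha hz)
  convert! this using 1
  simp only [id, one_mul, mul_one]
  ring

theorem differentiableOn_discAut (ha : ‖a‖ < 1) : DifferentiableOn ℂ (discAut a) (ball 0 1) :=
  fun _ hz ↦ (hasDerivAt_discAut ha (mem_ball_zero_iff.1 hz)).differentiableAt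
    |>.differentiableWithinAt

theorem norm_deriv_discAut (ha : ‖a‖ < 1) (hz : ‖z‖ < 1) :
    ‖deriv (discAut a) z‖ = (1 - ‖a‖ ^ 2) / ‖1 + conj a * z‖ ^ 2 := by
  have hreal : 1 - conj a * a = ((1 - ‖a‖ ^ 2 : ℝ) : ℂ) := by
    rw [conj_mul']
    push_cast
    rfl
  rw [(hasDerivAt_discAut ha hz).deriv, norm_div, norm_pow, hreal, norm_real, Real.norm_of_nonneg]
  exact sub_nonneg.2 (pow_le_one₀ (norm_nonneg a) ha.le)

theorem one_le_mul_norm_deriv_discAut (ha : ‖a‖ < 1) (hz : ‖z‖ < 1) :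
    1 ≤ (1 + ‖a‖) / (1 - ‖a‖) * ‖deriv (discAut a) z‖ := by
  have hpos : 0 < ‖1 + conj a * z‖ := norm_pos_iff.2 (one_add_conj_mul_ne_zero ha hz)
  have hle : ‖1 + conj a * z‖ ≤ 1 + ‖a‖ := by
    calc ‖1 + conj a * z‖ ≤ ‖(1 : ℂ)‖ + ‖conj a * z‖ := norm_add_le _ _
      _ ≤ 1 + ‖a‖ := by
        rw [norm_one, norm_mul, norm_conj]
        gcongr
        exact mul_le_of_le_one_right (norm_nonneg a) hz.le
  have heq : (1 + ‖a‖) / (1 - ‖a‖) * (1 - ‖a‖ ^ 2) = (1 + ‖a‖) ^ 2 := by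
    have : 1 - ‖a‖ ≠ 0 := (sub_pos.2 ha).ne'
    field_simp
    ring
  rw [norm_deriv_discAut ha hz, mul_div_assoc', heq, ← div_pow]
  exact one_le_pow₀ ((one_le_div hpos).2 hle)

end DiscAutomorphism

section WeightedBergman

instance sigmaFinite_dA : SigmaFinite dA := by
  have h : (ENNReal.ofReal π)⁻¹ ≠ ⊤ := by simp [pi_pos]
  rw [dA, ← ENNReal.coe_toNNReal h]
  exact inferInstanceAs (SigmaFinite (ENNReal.toNNReal _ • (volume : Measure ℂ)))

/-- The density `(1 + l) (1 - |z|²) ^ l` of the weighted Bergman measure on the unit disc. -/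
noncomputable def bergmanWeight (l : ℕ) (z : ℂ) : ℝ := (1 + l) * (1 - ‖z‖ ^ 2) ^ l

/-- The weighted area measure on the unit disc whose square-integrable holomorphic functions form
the weighted Bergman space with parameter `l`. -/
noncomputable def bergmanMeasure (l : ℕ) : Measure ℂ :=
  (dA.restrict (ball 0 1)).withDensity fun z ↦ ENNReal.ofReal (bergmanWeight l z)

instance sigmaFinite_bergmanMeasure (l : ℕ) : SigmaFinite (bergmanMeasure l) :=
  SigmaFinite.withDensity_ofReal _

@[fun_prop]
theorem measurable_bergmanWeight (l : ℕ) : Measurable (bergmanWeight l) := by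
  unfold bergmanWeight
  fun_prop

theorem lintegral_bergmanMeasure (l : ℕ) (G : ℂ → ENNReal) :
    ∫⁻ z, G z ∂bergmanMeasure l = (ENNReal.ofReal π)⁻¹ *
      ∫⁻ z in ball 0 1, ENNReal.ofReal (bergmanWeight l z) * G z := by
  rw [bergmanMeasure, lintegral_withDensity_eq_lintegral_mul_non_measurable _
    (by fun_prop) (by simp), dA, Measure.restrict_smul,
    lintegral_smul_measure, smul_eq_mul]
  rfl

theorem bergmanWeight_discAut {a z : ℂ} (ha : ‖a‖ < 1) (hz : ‖z‖ < 1) (l : ℕ) :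
    bergmanWeight l (discAut a z) = ‖deriv (discAut a) z‖ ^ l * bergmanWeight l z := by
  rw [bergmanWeight, bergmanWeight, one_sub_norm_discAut_sq ha hz, norm_deriv_discAut ha hz,
    mul_pow]
  ring

theorem bergmanWeight_nonneg {z : ℂ} (hz : ‖z‖ < 1) (l : ℕ) : 0 ≤ bergmanWeight l z := by
  have : 0 ≤ 1 - ‖z‖ ^ 2 := sub_nonneg.2 (pow_le_one₀ (norm_nonneg z) hz.le)
  unfold bergmanWeight
  positivity

/-- The constant in the weighted Bergman norm bound for composition with a holomorphic self-map of
the disc that sends `0` to `a`. -/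
noncomputable def compositionConst (l : ℕ) (a : ℂ) : ℝ := ((1 + ‖a‖) / (1 - ‖a‖)) ^ (l + 2)

theorem compositionConst_pos {a : ℂ} (ha : ‖a‖ < 1) (l : ℕ) : 0 < compositionConst l a := by
  have := sub_pos.2 ha
  unfold compositionConst
  positivity

theorem bergmanWeight_le_discAut {a z : ℂ} (ha : ‖a‖ < 1) (hz : ‖z‖ < 1) (l : ℕ) :
    bergmanWeight l z ≤ compositionConst l a *
      (‖deriv (discAut a) z‖ ^ 2 * bergmanWeight l (discAut a z)) := by
  have hone : 1 ≤ ((1 + ‖a‖) / (1 - ‖a‖) * ‖deriv (discAut a) z‖) ^ (l + 2) :=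
    one_le_pow₀ (one_le_mul_norm_deriv_discAut ha hz)
  calc bergmanWeight l z
      ≤ ((1 + ‖a‖) / (1 - ‖a‖) * ‖deriv (discAut a) z‖) ^ (l + 2) * bergmanWeight l z :=
        le_mul_of_one_le_left (bergmanWeight_nonneg hz l) hone
    _ = _ := by
        rw [bergmanWeight_discAut ha hz, compositionConst, mul_pow, pow_add ‖deriv (discAut a) z‖]
        ring

theorem lintegral_comp_discAut_bergmanMeasure_le {a : ℂ} (ha : ‖a‖ < 1) (l : ℕ)
    (G : ℂ → ENNReal) :
    ∫⁻ z, G (discAut a z) ∂bergmanMeasure l ≤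
      ENNReal.ofReal (compositionConst l a) * ∫⁻ z, G z ∂bergmanMeasure l := by
  have hchange : ∫⁻ z in ball 0 1, ENNReal.ofReal (bergmanWeight l z) * G z =
      ∫⁻ z in ball 0 1, ‖deriv (discAut a) z‖ₑ ^ 2 *
        (ENNReal.ofReal (bergmanWeight l (discAut a z)) * G (discAut a z)) := by
    have hderiv : ∀ z ∈ ball (0 : ℂ) 1,
        HasDerivWithinAt (discAut a) (deriv (discAut a) z) (ball 0 1) z := fun z hz ↦
      ((differentiableOn_discAut ha).differentiableAt
        (isOpen_ball.mem_nhds hz)).hasDerivAt.hasDerivWithinAt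
    rw [← setLIntegral_image_eq_setLIntegral_enorm_deriv_sq_mul measurableSet_ball hderiv
      (bijOn_discAut ha).injOn fun z ↦ ENNReal.ofReal (bergmanWeight l z) * G z,
      (bijOn_discAut ha).image_eq]
  simp only [lintegral_bergmanMeasure]
  rw [hchange, mul_left_comm, ← lintegral_const_mul' _ _ ENNReal.ofReal_ne_top]
  gcongr _ * ?_
  refine setLIntegral_mono' measurableSet_ball fun z hz ↦ ?_
  rw [← ofReal_norm, ← ENNReal.ofReal_pow (norm_nonneg _), ← mul_assoc, ← mul_assoc,
    mul_assoc (ENNReal.ofReal _), ← ENNReal.ofReal_mul (by positivity),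
    ← ENNReal.ofReal_mul (compositionConst_pos ha l).le]
  gcongr
  exact bergmanWeight_le_discAut ha (mem_ball_zero_iff.1 hz) l

theorem lintegral_norm_sq_comp_bergmanMeasure_le_of_map_zero {u ψ : ℂ → ℂ}
    (hu : DifferentiableOn ℂ u (ball 0 1)) (hψ : DifferentiableOn ℂ ψ (ball 0 1))
    (hmaps : MapsTo ψ (ball 0 1) (ball 0 1)) (hψ0 : ψ 0 = 0) (l : ℕ) :
    ∫⁻ z, ENNReal.ofReal (‖u (ψ z)‖ ^ 2) ∂bergmanMeasure l ≤
      ∫⁻ z, ENNReal.ofReal (‖u z‖ ^ 2) ∂bergmanMeasure l := by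
  simp only [lintegral_bergmanMeasure, bergmanWeight]
  gcongr _ * ?_
  exact setLIntegral_ball_radial_mul_le
    (W := fun r ↦ ENNReal.ofReal ((1 + l) * (1 - r ^ 2) ^ l)) (by fun_prop)
    ((hu.comp hψ hmaps).continuousOn.norm.pow 2) (fun _ _ ↦ sq_nonneg _)
    (hu.continuousOn.norm.pow 2) (fun _ _ ↦ sq_nonneg _)
    fun r hr ↦ circleAverage_norm_sq_comp_le hr.1 hr.2 hu hψ hmaps hψ0

theorem lintegral_norm_sq_comp_bergmanMeasure_le {u φ : ℂ → ℂ}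
    (hu : DifferentiableOn ℂ u (ball 0 1)) (hφ : DifferentiableOn ℂ φ (ball 0 1))
    (hmaps : MapsTo φ (ball 0 1) (ball 0 1)) (l : ℕ) :
    ∫⁻ z, ENNReal.ofReal (‖u (φ z)‖ ^ 2) ∂bergmanMeasure l ≤
      ENNReal.ofReal (compositionConst l (φ 0)) *
        ∫⁻ z, ENNReal.ofReal (‖u z‖ ^ 2) ∂bergmanMeasure l := by
  have ha : ‖φ 0‖ < 1 := mem_ball_zero_iff.1 (hmaps (mem_ball_self one_pos))
  have ha' : ‖-φ 0‖ < 1 := by rwa [norm_neg]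
  set ψ := discAut (-φ 0) ∘ φ
  have hφψ : ∀ z ∈ ball 0 1, φ z = discAut (φ 0) (ψ z) :=
    fun z hz ↦ (rightInvOn_discAut_neg ha (hmaps hz)).symm
  have hψ0 : ψ 0 = 0 := by simp [ψ, discAut]
  calc ∫⁻ z, ENNReal.ofReal (‖u (φ z)‖ ^ 2) ∂bergmanMeasure l
      = ∫⁻ z, ENNReal.ofReal (‖(u ∘ discAut (φ 0)) (ψ z)‖ ^ 2) ∂bergmanMeasure l := by
        simp only [lintegral_bergmanMeasure]
        congr 1
        refine setLIntegral_congr_fun measurableSet_ball fun z hz ↦ ?_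
        simp only [Function.comp_apply, hφψ z hz]
    _ ≤ ∫⁻ z, ENNReal.ofReal (‖u (discAut (φ 0) z)‖ ^ 2) ∂bergmanMeasure l :=
        lintegral_norm_sq_comp_bergmanMeasure_le_of_map_zero
          (hu.comp (differentiableOn_discAut ha) (mapsTo_discAut ha))
          ((differentiableOn_discAut ha').comp hφ hmaps) ((mapsTo_discAut ha').comp hmaps) hψ0 l
    _ ≤ _ := lintegral_comp_discAut_bergmanMeasure_le ha l fun z ↦ ENNReal.ofReal (‖u z‖ ^ 2)

end WeightedBergman

section ProductMeasures

variable {ι : Type*} {X : ι → Type*} [∀ i, MeasurableSpace (X i)]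
  {μ : ∀ i, Measure (X i)} [∀ i, SigmaFinite (μ i)] {f : ∀ i, X i → ENNReal}

theorem lmarginal_const_mul_prod [DecidableEq ι] (hf : ∀ i, Measurable (f i)) (s : Finset ι)
    (c : ENNReal) :
    ∫⋯∫⁻_s, (fun x ↦ c * ∏ i ∈ s, f i (x i)) ∂μ = fun _ ↦ c * ∏ i ∈ s, ∫⁻ t, f i t ∂μ i := by
  induction s using Finset.induction_on generalizing c with
  | empty => simp
  | insert κ s hκ ih =>
    have hslice (x : ∀ i, X i) :
        ∫⁻ t, c * ∏ i ∈ insert κ s, f i (Function.update x κ t i) ∂μ κ =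
          (c * ∫⁻ t, f κ t ∂μ κ) * ∏ i ∈ s, f i (x i) := by
      have hprod (t : X κ) : ∏ i ∈ s, f i (Function.update x κ t i) = ∏ i ∈ s, f i (x i) :=
        Finset.prod_congr rfl fun i hi ↦ by
          rw [Function.update_of_ne (ne_of_mem_of_not_mem hi hκ)]
      simp only [Finset.prod_insert hκ, Function.update_self, hprod]
      simp only [← mul_assoc]
      rw [lintegral_mul_const _ (by fun_prop), lintegral_const_mul _ (hf κ)]
    rw [lmarginal_insert' _ (by fun_prop) hκ]
    simp only [hslice, ih]
    rw [Finset.prod_insert hκ, mul_assoc]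

theorem lintegral_pi_prod [Fintype ι] (hf : ∀ i, Measurable (f i)) :
    ∫⁻ x, ∏ i, f i (x i) ∂Measure.pi μ = ∏ i, ∫⁻ t, f i t ∂μ i := by
  classical
  rcases isEmpty_or_nonempty (∀ i, X i) with hX | ⟨⟨x⟩⟩
  · obtain ⟨i, hi⟩ := isEmpty_pi.1 hX
    rw [lintegral_of_isEmpty, Finset.prod_eq_zero (Finset.mem_univ i) (lintegral_of_isEmpty _ _)]
  · simpa using congrFun (lmarginal_const_mul_prod (μ := μ) hf Finset.univ 1) x

theorem pi_withDensity_eq_withDensity_prod [Fintype ι] (hf : ∀ i, Measurable (f i))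
    [∀ i, SigmaFinite ((μ i).withDensity (f i))] :
    Measure.pi (fun i ↦ (μ i).withDensity (f i)) =
      (Measure.pi μ).withDensity fun x ↦ ∏ i, f i (x i) :=
  Measure.pi_eq fun s hs ↦ by
    simp only [withDensity_apply _ (MeasurableSet.univ_pi hs), withDensity_apply _ (hs _),
      Measure.restrict_pi_pi, lintegral_pi_prod hf]

end ProductMeasures

section Tensorization

variable {ι : Type*} [Fintype ι]

theorem mem_pi_ball_zero_iff {X : ι → Type*} [∀ i, SeminormedAddCommGroup (X i)] {z : ∀ i, X i}
    {r : ℝ} (hr : 0 < r) : z ∈ ball 0 r ↔ ∀ j, z j ∈ ball 0 r := by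
  simp only [mem_ball_zero_iff, pi_norm_lt_iff hr]

theorem lintegral_pi_bergmanMeasure (ℓ : ι → ℕ) (G : (ι → ℂ) → ENNReal) :
    ∫⁻ z, G z ∂Measure.pi (fun j ↦ bergmanMeasure (ℓ j)) =
      ∫⁻ z in ball 0 1, ENNReal.ofReal (∏ j, bergmanWeight (ℓ j) (z j)) * G z
        ∂Measure.pi fun _ ↦ dA := by
  have hweight : ∀ z ∈ ball (0 : ι → ℂ) 1,
      ∏ j, ENNReal.ofReal (bergmanWeight (ℓ j) (z j)) =
        ENNReal.ofReal (∏ j, bergmanWeight (ℓ j) (z j)) := fun z hz ↦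
    (ENNReal.ofReal_prod_of_nonneg fun j _ ↦
      bergmanWeight_nonneg (mem_ball_zero_iff.1 ((mem_pi_ball_zero_iff one_pos).1 hz j)) _).symm
  have hmeas (j : ι) : Measurable fun z ↦ ENNReal.ofReal (bergmanWeight (ℓ j) z) :=
    by fun_prop
  have : ∀ j, SigmaFinite ((dA.restrict (ball 0 1)).withDensity
      fun z ↦ ENNReal.ofReal (bergmanWeight (ℓ j) z)) :=
    fun j ↦ sigmaFinite_bergmanMeasure (ℓ j)
  have hpi : Measure.pi (fun j ↦ bergmanMeasure (ℓ j)) =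
      ((Measure.pi fun _ ↦ dA).restrict (ball 0 1)).withDensity
        fun z : ι → ℂ ↦ ∏ j, ENNReal.ofReal (bergmanWeight (ℓ j) (z j)) := by
    simp only [bergmanMeasure]
    rw [pi_withDensity_eq_withDensity_prod hmeas, ← Measure.restrict_pi_pi, ball_pi _ one_pos]
    rfl
  rw [hpi, lintegral_withDensity_eq_lintegral_mul_non_measurable _ (by fun_prop) (by
    simp [ENNReal.prod_lt_top])]
  exact setLIntegral_congr_fun measurableSet_ball fun z hz ↦ by simp [hweight z hz]

theorem ae_mem_ball_pi_bergmanMeasure (ℓ : ι → ℕ) :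
    ∀ᵐ z ∂Measure.pi fun j ↦ bergmanMeasure (ℓ j), z ∈ ball (0 : ι → ℂ) 1 := by
  have hcoord (j : ι) : ∀ᵐ t ∂bergmanMeasure (ℓ j), t ∈ ball 0 1 :=
    (withDensity_absolutelyContinuous _ _).ae_le (ae_restrict_mem measurableSet_ball)
  have hall : ∀ᵐ z ∂Measure.pi fun j ↦ bergmanMeasure (ℓ j), ∀ j, z j ∈ ball 0 1 :=
    ae_all_iff.2 fun j ↦ (Measure.tendsto_eval_ae_ae (μ := fun j ↦ bergmanMeasure (ℓ j))
      (i := j)).eventually (hcoord j)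
  filter_upwards [hall] with z hz using (mem_pi_ball_zero_iff one_pos).2 hz

theorem mapsTo_pi_map_ball {φ : ι → ℂ → ℂ} (hmaps : ∀ j, MapsTo (φ j) (ball 0 1) (ball 0 1)) :
    MapsTo (fun z j ↦ φ j (z j)) (ball (0 : ι → ℂ) 1) (ball 0 1) :=
  fun _ hz ↦ (mem_pi_ball_zero_iff one_pos).2 fun j ↦
    hmaps j ((mem_pi_ball_zero_iff one_pos).1 hz j)

theorem differentiableOn_pi_map {φ : ι → ℂ → ℂ}
    (hφ : ∀ j, DifferentiableOn ℂ (φ j) (ball 0 1)) :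
    DifferentiableOn ℂ (fun z j ↦ φ j (z j)) (ball (0 : ι → ℂ) 1) :=
  differentiableOn_pi.2 fun j ↦ (hφ j).comp (differentiable_apply j).differentiableOn
    fun _ hz ↦ (mem_pi_ball_zero_iff one_pos).1 hz j

variable [DecidableEq ι]

theorem update_mem_ball_iff {x : ι → ℂ} {κ : ι} {t : ℂ} (ht : t ∈ ball 0 1) :
    Function.update x κ t ∈ ball 0 1 ↔ ∀ j ≠ κ, x j ∈ ball 0 1 := by
  rw [mem_pi_ball_zero_iff one_pos, Function.forall_update_iff x fun _ b ↦ b ∈ ball 0 1,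
    and_iff_right ht]

theorem differentiableOn_indicator_comp_update {k : (ι → ℂ) → ℂ}
    (hk : DifferentiableOn ℂ k (ball 0 1)) (x : ι → ℂ) (κ : ι) :
    DifferentiableOn ℂ (fun t ↦ (ball 0 1).indicator k (Function.update x κ t)) (ball 0 1) := by
  by_cases hx : ∀ j ≠ κ, x j ∈ ball 0 1
  · have hmaps : MapsTo (Function.update x κ) (ball 0 1) (ball 0 1) :=
      fun t ht ↦ (update_mem_ball_iff ht).2 hx
    have hupdate : Differentiable ℂ (Function.update x κ) := fun t ↦
      (hasDerivAt_update x κ t).differentiableAt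
    exact (hk.comp hupdate.differentiableOn hmaps).congr
      fun t ht ↦ indicator_of_mem (hmaps ht) k
  · exact (differentiableOn_const 0).congr
      fun t ht ↦ indicator_of_notMem (mt (update_mem_ball_iff ht).1 hx) k

theorem lintegral_pi_le_mul_of_forall_update {X : ι → Type*} [∀ i, MeasurableSpace (X i)]
    {μ : ∀ i, Measure (X i)} [∀ i, SigmaFinite (μ i)] {F G : (∀ i, X i) → ENNReal}
    (hF : Measurable F) (hG : Measurable G) (C : ENNReal) (κ : ι)
    (hFG : ∀ x, ∫⁻ t, F (Function.update x κ t) ∂μ κ ≤ C * ∫⁻ t, G (Function.update x κ t) ∂μ κ) :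
    ∫⁻ x, F x ∂Measure.pi μ ≤ C * ∫⁻ x, G x ∂Measure.pi μ := by
  rw [← lintegral_const_mul C hG]
  refine lintegral_le_of_lmarginal_le {κ} hF (hG.const_mul C) ?_
  rw [lmarginal_singleton, lmarginal_singleton]
  exact fun x ↦ (hFG x).trans_eq (lintegral_const_mul C (hG.comp (measurable_update x))).symm

theorem lintegral_norm_sq_update_comp_le (ℓ : ι → ℕ) {k : (ι → ℂ) → ℂ}
    (hk : DifferentiableOn ℂ k (ball 0 1)) {φ : ℂ → ℂ} (hφ : DifferentiableOn ℂ φ (ball 0 1))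
    (hmaps : MapsTo φ (ball 0 1) (ball 0 1)) (κ : ι) :
    ∫⁻ z, ENNReal.ofReal (‖k (Function.update z κ (φ (z κ)))‖ ^ 2)
        ∂Measure.pi (fun j ↦ bergmanMeasure (ℓ j)) ≤
      ENNReal.ofReal (compositionConst (ℓ κ) (φ 0)) *
        ∫⁻ z, ENNReal.ofReal (‖k z‖ ^ 2) ∂Measure.pi (fun j ↦ bergmanMeasure (ℓ j)) := by
  set μ := Measure.pi fun j ↦ bergmanMeasure (ℓ j)
  -- Fubini needs measurable integrands, so `k` and `φ` are cut off outside their domains.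
  set k' := (ball 0 1).indicator k
  set φ' := (ball 0 1).indicator φ
  have hk' : Measurable k' :=
    measurable_indicator_of_continuousOn hk.continuousOn measurableSet_ball
  have hφ' : Measurable φ' :=
    measurable_indicator_of_continuousOn hφ.continuousOn measurableSet_ball
  have hkk' : EqOn k' k (ball 0 1) := eqOn_indicator
  have hφφ' : EqOn φ' φ (ball 0 1) := eqOn_indicator
  have hslice (x : ι → ℂ) :
      ∫⁻ t, ENNReal.ofReal (‖k' (Function.update x κ (φ' t))‖ ^ 2) ∂bergmanMeasure (ℓ κ) ≤
        ENNReal.ofReal (compositionConst (ℓ κ) (φ 0)) *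
          ∫⁻ t, ENNReal.ofReal (‖k' (Function.update x κ t)‖ ^ 2) ∂bergmanMeasure (ℓ κ) := by
    rw [← hφφ' (mem_ball_self one_pos)]
    exact lintegral_norm_sq_comp_bergmanMeasure_le (differentiableOn_indicator_comp_update hk x κ)
      (hφ.congr hφφ') (hmaps.congr hφφ'.symm) (ℓ κ)
  calc ∫⁻ z, ENNReal.ofReal (‖k (Function.update z κ (φ (z κ)))‖ ^ 2) ∂μ
      = ∫⁻ z, ENNReal.ofReal (‖k' (Function.update z κ (φ' (z κ)))‖ ^ 2) ∂μ := by
        refine lintegral_congr_ae ?_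
        filter_upwards [ae_mem_ball_pi_bergmanMeasure ℓ] with z hz
        have hz : ∀ j, z j ∈ ball 0 1 := (mem_pi_ball_zero_iff one_pos).1 hz
        rw [hφφ' (hz κ), hkk' ((update_mem_ball_iff (hmaps (hz κ))).2 fun j _ ↦ hz j)]
    _ ≤ ENNReal.ofReal (compositionConst (ℓ κ) (φ 0)) * ∫⁻ z, ENNReal.ofReal (‖k' z‖ ^ 2) ∂μ := by
        refine lintegral_pi_le_mul_of_forall_update ?_ (by fun_prop) _ κ fun x ↦ ?_
        · have : Measurable fun z : ι → ℂ ↦ Function.update z κ (φ' (z κ)) :=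
            measurable_update'.comp (measurable_id.prodMk (hφ'.comp (measurable_pi_apply κ)))
          fun_prop
        · simpa only [Function.update_idem, Function.update_self] using hslice x
    _ = ENNReal.ofReal (compositionConst (ℓ κ) (φ 0)) * ∫⁻ z, ENNReal.ofReal (‖k z‖ ^ 2) ∂μ := by
        congr 1
        refine lintegral_congr_ae ?_
        filter_upwards [ae_mem_ball_pi_bergmanMeasure ℓ] with z hz
        rw [hkk' hz]

theorem lintegral_norm_sq_piecewise_comp_le (ℓ : ι → ℕ) {φ : ι → ℂ → ℂ}
    (hφ : ∀ j, DifferentiableOn ℂ (φ j) (ball 0 1))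
    (hmaps : ∀ j, MapsTo (φ j) (ball 0 1) (ball 0 1)) (s : Finset ι) {h : (ι → ℂ) → ℂ}
    (hh : DifferentiableOn ℂ h (ball 0 1)) :
    ∫⁻ z, ENNReal.ofReal (‖h fun j ↦ s.piecewise φ (fun _ ↦ id) j (z j)‖ ^ 2)
        ∂Measure.pi (fun j ↦ bergmanMeasure (ℓ j)) ≤
      ENNReal.ofReal (∏ j ∈ s, compositionConst (ℓ j) (φ j 0)) *
        ∫⁻ z, ENNReal.ofReal (‖h z‖ ^ 2) ∂Measure.pi (fun j ↦ bergmanMeasure (ℓ j)) := by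
  induction s using Finset.induction_on with
  | empty => simp
  | insert κ s hκ ih =>
    have hinsert (z : ι → ℂ) :
        (fun j ↦ (insert κ s).piecewise φ (fun _ ↦ id) j (z j)) =
          fun j ↦ s.piecewise φ (fun _ ↦ id) j (Function.update z κ (φ κ (z κ)) j) := by
      ext j
      rcases eq_or_ne j κ with rfl | hj
      · simp [hκ]
      · by_cases hjs : j ∈ s <;> simp [hj, hjs]
    have hφ_s (j : ι) : DifferentiableOn ℂ (s.piecewise φ (fun _ ↦ id) j) (ball 0 1) := by
      by_cases hj : j ∈ s <;> simp [hj, hφ j, differentiableOn_id]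
    have hmaps_s (j : ι) : MapsTo (s.piecewise φ (fun _ ↦ id) j) (ball 0 1) (ball 0 1) := by
      by_cases hj : j ∈ s <;> simp [hj, hmaps j, mapsTo_id]
    have hk : DifferentiableOn ℂ
        (fun z : ι → ℂ ↦ h fun j ↦ s.piecewise φ (fun _ ↦ id) j (z j)) (ball 0 1) :=
      hh.comp (differentiableOn_pi_map hφ_s) (mapsTo_pi_map_ball hmaps_s)
    have hC : 0 ≤ compositionConst (ℓ κ) (φ κ 0) :=
      (compositionConst_pos (mem_ball_zero_iff.1 (hmaps κ (mem_ball_self one_pos))) _).le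
    simp only [hinsert]
    rw [Finset.prod_insert hκ, ENNReal.ofReal_mul hC, mul_assoc]
    exact (lintegral_norm_sq_update_comp_le ℓ hk (hφ κ) (hmaps κ) κ).trans (by gcongr)

end Tensorization

section WeightedComposition

variable {ι : Type*} [Fintype ι]

theorem lintegral_norm_sq_comp_pi_bergmanMeasure_le (ℓ : ι → ℕ) {φ : ι → ℂ → ℂ}
    (hφ : ∀ j, DifferentiableOn ℂ (φ j) (ball 0 1))
    (hmaps : ∀ j, MapsTo (φ j) (ball 0 1) (ball 0 1)) {h : (ι → ℂ) → ℂ}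
    (hh : DifferentiableOn ℂ h (ball 0 1)) :
    ∫⁻ z, ENNReal.ofReal (‖h fun j ↦ φ j (z j)‖ ^ 2)
        ∂Measure.pi (fun j ↦ bergmanMeasure (ℓ j)) ≤
      ENNReal.ofReal (∏ j, compositionConst (ℓ j) (φ j 0)) *
        ∫⁻ z, ENNReal.ofReal (‖h z‖ ^ 2) ∂Measure.pi (fun j ↦ bergmanMeasure (ℓ j)) := by
  classical
  simpa only [Finset.piecewise_univ] using
    lintegral_norm_sq_piecewise_comp_le ℓ hφ hmaps Finset.univ hh

theorem setOf_forall_norm_lt_one_eq_ball : {z : ι → ℂ | ∀ j, ‖z j‖ < 1} = ball 0 1 := by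
  ext z
  simp only [mem_ofPred_eq, mem_ball_zero_iff, pi_norm_lt_iff one_pos]

theorem setLIntegral_mul_prod_bergmanWeight (ℓ : ι → ℕ) {G : (ι → ℂ) → ℝ} (hG : ∀ z, 0 ≤ G z) :
    ∫⁻ z in {z : ι → ℂ | ∀ j, ‖z j‖ < 1},
        ENNReal.ofReal (G z * ∏ j, (1 + (ℓ j : ℝ)) * (1 - ‖z j‖ ^ 2) ^ ℓ j)
        ∂(Measure.pi fun _ ↦ dA) =
      ∫⁻ z, ENNReal.ofReal (G z) ∂Measure.pi (fun j ↦ bergmanMeasure (ℓ j)) := by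
  rw [lintegral_pi_bergmanMeasure, setOf_forall_norm_lt_one_eq_ball]
  refine lintegral_congr fun z ↦ ?_
  rw [ENNReal.ofReal_mul (hG z), mul_comm]
  rfl

theorem lintegral_norm_sq_mul_comp_pi_bergmanMeasure_le (ℓ : ι → ℕ) {f : (ι → ℂ) → ℂ} {M : ℝ}
    (hf : ∀ z ∈ ball 0 1, ‖f z‖ ≤ M) {φ : ι → ℂ → ℂ}
    (hφ : ∀ j, DifferentiableOn ℂ (φ j) (ball 0 1))
    (hmaps : ∀ j, MapsTo (φ j) (ball 0 1) (ball 0 1)) {h : (ι → ℂ) → ℂ}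
    (hh : DifferentiableOn ℂ h (ball 0 1)) :
    ∫⁻ z, ENNReal.ofReal (‖f z * h fun j ↦ φ j (z j)‖ ^ 2)
        ∂Measure.pi (fun j ↦ bergmanMeasure (ℓ j)) ≤
      ENNReal.ofReal (M ^ 2 * ∏ j, compositionConst (ℓ j) (φ j 0)) *
        ∫⁻ z, ENNReal.ofReal (‖h z‖ ^ 2) ∂Measure.pi (fun j ↦ bergmanMeasure (ℓ j)) := by
  calc ∫⁻ z, ENNReal.ofReal (‖f z * h fun j ↦ φ j (z j)‖ ^ 2)
        ∂Measure.pi (fun j ↦ bergmanMeasure (ℓ j))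
      ≤ ∫⁻ z, ENNReal.ofReal (M ^ 2) * ENNReal.ofReal (‖h fun j ↦ φ j (z j)‖ ^ 2)
          ∂Measure.pi (fun j ↦ bergmanMeasure (ℓ j)) := by
        refine lintegral_mono_ae ?_
        filter_upwards [ae_mem_ball_pi_bergmanMeasure ℓ] with z hz
        rw [← ENNReal.ofReal_mul (sq_nonneg M), norm_mul, mul_pow]
        gcongr
        exact hf z hz
    _ ≤ _ := by
        rw [lintegral_const_mul' _ _ ENNReal.ofReal_ne_top, ENNReal.ofReal_mul (sq_nonneg M),
          mul_assoc]
        gcongr _ * ?_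
        exact lintegral_norm_sq_comp_pi_bergmanMeasure_le ℓ hφ hmaps hh

theorem norm_inv_one_sub_mul_conj_pow_le {z w : ℂ} (hz : ‖z‖ < 1) (hw : ‖w‖ < 1) (n : ℕ) :
    ‖((1 - z * conj w) ^ n)⁻¹‖ ≤ ((1 - ‖w‖) ^ n)⁻¹ := by
  have : 0 < 1 - ‖w‖ := sub_pos.2 hw
  have hle : 1 - ‖w‖ ≤ ‖1 - z * conj w‖ :=
    calc 1 - ‖w‖ ≤ ‖(1 : ℂ)‖ - ‖z * conj w‖ := by
          rw [norm_one, norm_mul, norm_conj]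
          gcongr
          exact mul_le_of_le_one_left (norm_nonneg w) hz.le
      _ ≤ ‖1 - z * conj w‖ := norm_sub_norm_le ..
  rw [norm_inv, norm_pow]
  gcongr

theorem norm_const_mul_prod_inv_one_sub_mul_conj_pow_le (c : ℂ) {z w : ι → ℂ}
    (hz : ∀ j, ‖z j‖ < 1) (hw : ∀ j, ‖w j‖ < 1) (n : ι → ℕ) :
    ‖c * ∏ j, ((1 - z j * conj (w j)) ^ n j)⁻¹‖ ≤ ‖c‖ * ∏ j, ((1 - ‖w j‖) ^ n j)⁻¹ := by
  rw [norm_mul, norm_prod]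
  gcongr with j
  exact norm_inv_one_sub_mul_conj_pow_le (hz j) (hw j) _

theorem differentiableOn_const_add_div_add (E F G : ℂ) (hF : 1 ≤ ‖F‖) :
    DifferentiableOn ℂ (fun z ↦ G + E / (z + F)) (ball 0 1) := by
  refine ((differentiableOn_const E).div (differentiableOn_id.add_const F)
    fun z hz h ↦ ?_).const_add G
  rw [id, add_eq_zero_iff_eq_neg] at h
  rw [mem_ball_zero_iff, h, norm_neg] at hz
  exact hz.not_ge hF

theorem differentiableOn_const_add_mul_div_one_sub (a b : ℂ) {c : ℂ} (hc : ‖c‖ ≤ 1) :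
    DifferentiableOn ℂ (fun z ↦ a + b * z / (1 - c * z)) (ball 0 1) := by
  refine ((differentiableOn_id.const_mul b).div ((differentiableOn_id.const_mul c).const_sub 1)
    fun z hz h ↦ ?_).const_add a
  have hlt : ‖c * z‖ < 1 := by
    rw [norm_mul]
    exact mul_lt_one_of_nonneg_of_lt_one_right hc (norm_nonneg z) (mem_ball_zero_iff.1 hz)
  exact hlt.ne (by simpa using (congrArg norm (sub_eq_zero.1 h)).symm)

theorem stmt_17_general (ℓ : ι → ℕ) {f : (ι → ℂ) → ℂ} {M : ℝ}
    (hf : ∀ z ∈ {z : ι → ℂ | ∀ j, ‖z j‖ < 1}, ‖f z‖ ≤ M) {g : (ι → ℂ) → ι → ℂ}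
    (hgmap : ∀ z ∈ {z : ι → ℂ | ∀ j, ‖z j‖ < 1}, ∀ κ, ‖g z κ‖ < 1)
    (hg : ∀ κ, ∃ φ : ℂ → ℂ, DifferentiableOn ℂ φ (ball 0 1) ∧
      ∀ z ∈ {z : ι → ℂ | ∀ j, ‖z j‖ < 1}, g z κ = φ (z κ)) :
    ∃ R : ℝ, 0 < R ∧
      ∀ h : (ι → ℂ) → ℂ,
        DifferentiableOn ℂ h {z : ι → ℂ | ∀ j, ‖z j‖ < 1} →
        (∫⁻ z in {z : ι → ℂ | ∀ j, ‖z j‖ < 1},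
            ENNReal.ofReal (‖f z * h (g z)‖ ^ 2 *
              ∏ j, (1 + (ℓ j : ℝ)) * (1 - ‖z j‖ ^ 2) ^ ℓ j)
            ∂(Measure.pi fun _ => dA))
          ≤ ENNReal.ofReal R *
            ∫⁻ x in {x : ι → ℂ | ∀ j, ‖x j‖ < 1},
              ENNReal.ofReal (‖h x‖ ^ 2 * ∏ j, (1 + (ℓ j : ℝ)) * (1 - ‖x j‖ ^ 2) ^ ℓ j)
              ∂(Measure.pi fun _ => dA) := by
  choose φ hφ hgφ using hg
  have hmaps (κ : ι) : MapsTo (φ κ) (ball 0 1) (ball 0 1) := fun t ht ↦ by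
    have hdiag : ∀ _ : ι, ‖t‖ < 1 := fun _ ↦ mem_ball_zero_iff.1 ht
    simpa only [hgφ κ _ hdiag, mem_ball_zero_iff] using hgmap (fun _ ↦ t) hdiag κ
  have hM : ∀ z ∈ ball 0 1, ‖f z‖ ≤ max M 1 := fun z hz ↦
    le_max_of_le_left (hf z (setOf_forall_norm_lt_one_eq_ball.ge hz))
  refine ⟨max M 1 ^ 2 * ∏ κ, compositionConst (ℓ κ) (φ κ 0), ?_, fun h hh ↦ ?_⟩
  · have hprod : 0 < ∏ κ, compositionConst (ℓ κ) (φ κ 0) := Finset.prod_pos fun κ _ ↦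
      compositionConst_pos (mem_ball_zero_iff.1 (hmaps κ (mem_ball_self one_pos))) _
    positivity
  rw [setLIntegral_mul_prod_bergmanWeight ℓ fun _ ↦ sq_nonneg _,
    setLIntegral_mul_prod_bergmanWeight ℓ fun _ ↦ sq_nonneg _]
  rw [setOf_forall_norm_lt_one_eq_ball] at hh hgφ
  refine (lintegral_congr_ae ?_).trans_le
    (lintegral_norm_sq_mul_comp_pi_bergmanMeasure_le ℓ hM hφ hmaps hh)
  filter_upwards [ae_mem_ball_pi_bergmanMeasure ℓ] with z hz
  rw [funext fun κ ↦ hgφ κ z hz]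

end WeightedComposition

theorem stmt_17 (d : ℕ) (hd : 1 ≤ d) (ℓ : Fin d → ℕ)
    (U₁ U₂ : Finset (Fin d)) (hU : U₁ ∪ U₂ = Finset.univ) (hUdisj : U₁ ∩ U₂ = ∅)
    (q : Fin d → ℂ) (hq : ∀ j ∈ U₂, ‖q j‖ = 1)
    (c : ℂ) (w : Fin d → ℂ) (hw : ∀ j, ‖w j‖ < 1)
    (f : (Fin d → ℂ) → ℂ)
    (hf : ∀ z : Fin d → ℂ, f z = c * ∏ j, ((1 - z j * conj (w j)) ^ (ℓ j + 2))⁻¹)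
    (g : (Fin d → ℂ) → Fin d → ℂ)
    (hgmap : ∀ z ∈ {z : Fin d → ℂ | ∀ j, ‖z j‖ < 1}, ∀ κ, ‖g z κ‖ < 1)
    (hg1 : ∀ κ ∈ U₁,
      (∃ k : ℂ, ‖k‖ < 1 ∧ ∀ z ∈ {z : Fin d → ℂ | ∀ j, ‖z j‖ < 1}, g z κ = k) ∨
      (∃ E F G : ℂ, E ≠ 0 ∧
        ‖(G * F + E) * conj F - G‖ + ‖E‖ ≤ ‖F‖ ^ 2 - 1 ∧
        ∀ z ∈ {z : Fin d → ℂ | ∀ j, ‖z j‖ < 1}, g z κ = G + E / (z κ + F)))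
    (hg2 : ∀ κ ∈ U₂,
      (∃ k : ℂ, ‖k‖ < 1 ∧ ∀ z ∈ {z : Fin d → ℂ | ∀ j, ‖z j‖ < 1}, g z κ = k) ∨
      (∃ α β : ℂ, β ≠ 0 ∧
        ‖α + conj α * (β - α ^ 2)‖ + ‖β‖ ≤ 1 - ‖α‖ ^ 2 ∧
        ∀ z ∈ {z : Fin d → ℂ | ∀ j, ‖z j‖ < 1},
          g z κ = α + β * q κ * z κ / (1 - α * q κ * z κ))) :
    ∃ R : ℝ, 0 < R ∧
      ∀ h : (Fin d → ℂ) → ℂ,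
        AnalyticOnNhd ℂ h {z : Fin d → ℂ | ∀ j, ‖z j‖ < 1} →
        (∫⁻ z in {z : Fin d → ℂ | ∀ j, ‖z j‖ < 1},
            ENNReal.ofReal (‖f z * h (g z)‖ ^ 2 *
              ∏ j, (1 + (ℓ j : ℝ)) * (1 - ‖z j‖ ^ 2) ^ ℓ j)
            ∂(Measure.pi fun _ => dA))
          ≤ ENNReal.ofReal R *
            ∫⁻ x in {x : Fin d → ℂ | ∀ j, ‖x j‖ < 1},
              ENNReal.ofReal (‖h x‖ ^ 2 * ∏ j, (1 + (ℓ j : ℝ)) * (1 - ‖x j‖ ^ 2) ^ ℓ j)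
              ∂(Measure.pi fun _ => dA) := by
  have hbound : ∀ z ∈ {z : Fin d → ℂ | ∀ j, ‖z j‖ < 1},
      ‖f z‖ ≤ ‖c‖ * ∏ j, ((1 - ‖w j‖) ^ (ℓ j + 2))⁻¹ := fun z hz ↦
    hf z ▸ norm_const_mul_prod_inv_one_sub_mul_conj_pow_le c hz hw _
  have hcoord (κ : Fin d) : ∃ φ : ℂ → ℂ, DifferentiableOn ℂ φ (ball 0 1) ∧
      ∀ z ∈ {z : Fin d → ℂ | ∀ j, ‖z j‖ < 1}, g z κ = φ (z κ) := by
    rcases Finset.mem_union.1 (hU ▸ Finset.mem_univ κ) with hκ | hκ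
    · rcases hg1 κ hκ with ⟨k, -, hk⟩ | ⟨E, F, G, -, hEF, hfrac⟩
      · exact ⟨fun _ ↦ k, differentiableOn_const k, hk⟩
      · have hF : 1 ≤ ‖F‖ := (one_le_sq_iff₀ (norm_nonneg F)).1 <| by
          linarith [norm_nonneg ((G * F + E) * conj F - G), norm_nonneg E]
        exact ⟨_, differentiableOn_const_add_div_add E F G hF, hfrac⟩
    · rcases hg2 κ hκ with ⟨k, -, hk⟩ | ⟨α, β, -, hαβ, hfrac⟩
      · exact ⟨fun _ ↦ k, differentiableOn_const k, hk⟩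
      · have hα : ‖α * q κ‖ ≤ 1 := by
          rw [norm_mul, hq κ hκ, mul_one, ← sq_le_one_iff₀ (norm_nonneg α)]
          linarith [norm_nonneg (α + conj α * (β - α ^ 2)), norm_nonneg β]
        exact ⟨_, differentiableOn_const_add_mul_div_one_sub α (β * q κ) hα, hfrac⟩
  obtain ⟨R, hR, hle⟩ := stmt_17_general ℓ hbound hgmap hcoord
  exact ⟨R, hR, fun h hh ↦ hle h hh.differentiableOn⟩
end
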